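/- arXiv:2201.10418 — 5 statements merged into one kernel-verified Lean document; each statement's English description precedes it below -/
import Mathlib

section
/- Let m ≥ 3. No strategyproof SDS that is 0-randomly dictatorial is β-ex post efficient for any β < 1/m; that is, for every such SDS f there exist a profile R and an alternative x that is Pareto-dominated in R such that f(R,x) ≥ 1/m. -/
open Finset

noncomputable section

/-- A preference profile: each voter's strict linear order on the `m`
alternatives is encoded as a ranking permutation, where `R i x` is the rank of
alternative `x` for voter `i` (rank `0` = most preferred). Voter `i` strictly
prefers `x` to `y` iff `R i x < R i y`. -/
abbrev Profile (n m : ℕ) := Fin n → Equiv.Perm (Fin m)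

/-- `F R x` is the probability that the social decision scheme `F` assigns to
alternative `x` at profile `R`; `IsSDS F` says every `F R` is a lottery. -/
def IsSDS {n m : ℕ} (F : Profile n m → Fin m → ℝ) : Prop :=
  (∀ R x, 0 ≤ F R x) ∧ ∀ R, ∑ x, F R x = 1

/-- Stochastic-dominance preference of voter `i` (with preferences as in `R`):
lottery `p` is weakly preferred to lottery `q`. -/
def SDPref {n m : ℕ} (R : Profile n m) (i : Fin n) (p q : Fin m → ℝ) : Prop :=
  ∀ x : Fin m,
    ∑ y ∈ univ.filter (fun y => R i y < R i x), q y ≤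
      ∑ y ∈ univ.filter (fun y => R i y < R i x), p y

/-- Strategyproofness: the truthful outcome is SD-preferred to any outcome
obtainable by a unilateral deviation. -/
def Strategyproof {n m : ℕ} (F : Profile n m → Fin m → ℝ) : Prop :=
  ∀ (R R' : Profile n m) (i : Fin n),
    (∀ j, j ≠ i → R j = R' j) → SDPref R i (F R) (F R')

/-- Anonymity: permuting the voters does not change the outcome. -/
def Anonymous {n m : ℕ} (F : Profile n m → Fin m → ℝ) : Prop :=
  ∀ (π : Equiv.Perm (Fin n)) (R : Profile n m), F (fun i => R (π i)) = F R

/-- The profile obtained from `R` by relabeling the alternatives by `τ`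
(in `relabel τ R`, alternative `τ x` gets the rank that `x` has in `R`). -/
def relabel {n m : ℕ} (τ : Equiv.Perm (Fin m)) (R : Profile n m) : Profile n m :=
  fun i => τ.symm.trans (R i)

/-- Neutrality: relabeling the alternatives permutes the outcome accordingly. -/
def Neutral {n m : ℕ} (F : Profile n m → Fin m → ℝ) : Prop :=
  ∀ (τ : Equiv.Perm (Fin m)) (R : Profile n m) (x : Fin m),
    F (relabel τ R) (τ x) = F R x

/-- The supporting size `n_{xy}(R)`: the number of voters preferring `x` to `y`. -/
def suppSize {n m : ℕ} (R : Profile n m) (x y : Fin m) : ℕ :=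
  (univ.filter (fun i => R i x < R i y)).card

/-- `x` is the Condorcet winner of `R`. -/
def CondorcetWinner {n m : ℕ} (R : Profile n m) (x : Fin m) : Prop :=
  ∀ y, y ≠ x → suppSize R y x < suppSize R x y

/-- `α`-Condorcet-consistency. -/
def CondorcetConsistent {n m : ℕ} (F : Profile n m → Fin m → ℝ) (α : ℝ) : Prop :=
  ∀ R x, CondorcetWinner R x → α ≤ F R x

/-- `x` is Pareto-dominated in `R`. -/
def ParetoDominated {n m : ℕ} (R : Profile n m) (x : Fin m) : Prop :=
  ∃ y, ∀ i, R i y < R i x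

/-- `β`-ex post efficiency. -/
def ExPostEff {n m : ℕ} (F : Profile n m → Fin m → ℝ) (β : ℝ) : Prop :=
  ∀ R x, ParetoDominated R x → F R x ≤ β

/-- The probability that the dictatorial SDS of voter `i` assigns to `x`:
`1` if `x` is voter `i`'s most preferred alternative and `0` otherwise. -/
def dictProb {n m : ℕ} (R : Profile n m) (i : Fin n) (x : Fin m) : ℝ :=
  if ∀ y, R i x ≤ R i y then 1 else 0

/-- `d` is a random dictatorship. -/
def IsRandDict {n m : ℕ} (d : Profile n m → Fin m → ℝ) : Prop :=
  ∃ δ : Fin n → ℝ, (∀ i, 0 ≤ δ i) ∧ ∑ i, δ i = 1 ∧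
    ∀ R x, d R x = ∑ i, δ i * dictProb R i x

/-- `F` can be written as `γ d + (1 - γ) g` with `d` a random dictatorship and
`g` a strategyproof SDS. -/
def DecomposesAt {n m : ℕ} (F : Profile n m → Fin m → ℝ) (γ : ℝ) : Prop :=
  ∃ d g : Profile n m → Fin m → ℝ, IsRandDict d ∧ IsSDS g ∧ Strategyproof g ∧
    ∀ R x, F R x = γ * d R x + (1 - γ) * g R x

/-- `F` is `γ`-randomly dictatorial: `γ ∈ [0,1]` is the maximal value admitting
a decomposition `F = γ d + (1 - γ) g` as above. -/
def RandDictDegree {n m : ℕ} (F : Profile n m → Fin m → ℝ) (γ : ℝ) : Prop :=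
  0 ≤ γ ∧ γ ≤ 1 ∧ DecomposesAt F γ ∧
    ∀ γ', 0 ≤ γ' → γ' ≤ 1 → DecomposesAt F γ' → γ' ≤ γ

/-- The profile `R^{i:yx}` obtained from `R` by swapping `x` and `y` in voter
`i`'s preference relation (used when `x` is ranked directly above `y`). -/
def swapTop {n m : ℕ} (R : Profile n m) (i : Fin n) (x y : Fin m) : Profile n m :=
  Function.update R i ((R i).trans (Equiv.swap (R i x) (R i y)))

/-- The weight vector `b` defining the randomized Copeland rule:
`b k = 2/(m(m-1))` for `k > n/2`, `b k = 1/(m(m-1))` for `k = n/2`, `b k = 0`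
for `k < n/2`. -/
def copelandWeight (n m : ℕ) (k : ℕ) : ℝ :=
  if n < 2 * k then 2 / ((m : ℝ) * ((m : ℝ) - 1))
  else if 2 * k = n then 1 / ((m : ℝ) * ((m : ℝ) - 1))
  else 0

/-- The randomized Copeland rule `f_C(R, x) = ∑_{y ≠ x} b_{n_{xy}(R)}`. -/
def randCopeland (n m : ℕ) : Profile n m → Fin m → ℝ :=
  fun R x => ∑ y ∈ univ.filter (fun y => y ≠ x), copelandWeight n m (suppSize R x y)

/-- A point voting SDS, given by a scoring vector `a` (indexed by ranks
`0, …, m-1`, i.e. `a k` is the score of the `(k+1)`-st ranked alternative). -/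
structure PointVoting (n m : ℕ) where
  a : ℕ → ℝ
  mono : ∀ k l : ℕ, k ≤ l → l < m → a l ≤ a k
  nonneg : ∀ k : ℕ, k < m → 0 ≤ a k
  sum_eq : ∑ k ∈ Finset.range m, a k = 1 / (n : ℝ)

/-- The value of a point voting SDS. -/
def pvVal {n m : ℕ} (pv : PointVoting n m) : Profile n m → Fin m → ℝ :=
  fun R x => ∑ i, pv.a (R i x : ℕ)

/-- A supporting size SDS, given by a vector `b` indexed by supporting sizes
`0, …, n`. -/
structure SupportingSize (n m : ℕ) where
  b : ℕ → ℝ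
  mono : ∀ k l : ℕ, k ≤ l → l ≤ n → b k ≤ b l
  nonneg : ∀ k : ℕ, k ≤ n → 0 ≤ b k
  pair_eq : ∀ k : ℕ, k ≤ n → b k + b (n - k) = 2 / ((m : ℝ) * ((m : ℝ) - 1))

/-- The value of a supporting size SDS. -/
def ssVal {n m : ℕ} (S : SupportingSize n m) : Profile n m → Fin m → ℝ :=
  fun R x => ∑ y ∈ univ.filter (fun y => y ≠ x), S.b (suppSize R x y)

/-- A duple: a strategyproof SDS that puts positive probability on at most two
fixed alternatives. -/
def IsDuple {n m : ℕ} (g : Profile n m → Fin m → ℝ) : Prop :=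
  IsSDS g ∧ Strategyproof g ∧ ∃ x y : Fin m, ∀ R z, z ≠ x → z ≠ y → g R z = 0

/-- A unilateral: a strategyproof SDS that depends only on the preferences of a
single fixed voter. -/
def IsUnilateral {n m : ℕ} (g : Profile n m → Fin m → ℝ) : Prop :=
  IsSDS g ∧ Strategyproof g ∧
    ∃ i : Fin n, ∀ R R' : Profile n m, R i = R' i → g R = g R'

/-- `F` is a convex combination of SDSs satisfying the property `P`. -/
def MixOf {n m : ℕ} (P : (Profile n m → Fin m → ℝ) → Prop)
    (F : Profile n m → Fin m → ℝ) : Prop :=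
  ∃ (K : ℕ) (w : Fin K → ℝ) (g : Fin K → Profile n m → Fin m → ℝ),
    (∀ k, 0 ≤ w k) ∧ ∑ k, w k = 1 ∧ (∀ k, P (g k)) ∧
    ∀ R x, F R x = ∑ k, w k * g k R x

/-- The uniform random dictatorship. -/
def uniformRD (n m : ℕ) : Profile n m → Fin m → ℝ :=
  fun R x => (1 / (n : ℝ)) * ∑ i, dictProb R i x

/-- The uniform lottery. -/
def uniformLottery (n m : ℕ) : Profile n m → Fin m → ℝ :=
  fun _ _ => 1 / (m : ℝ)

/-- Discrete curvature of a set function. -/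
def curv {m : ℕ} (W : Finset (Fin m) → ℝ) (U : Finset (Fin m)) (x y : Fin m) : ℝ :=
  W (insert x U) + W (insert y U) - W U - W (insert x (insert y U))

lemma curv_symm {m : ℕ} (W : Finset (Fin m) → ℝ) (U : Finset (Fin m)) (x y : Fin m) :
    curv W U x y = curv W U y x := by
  unfold curv; rw [Finset.insert_comm]; ring

/-- The functional `Λ`. -/
def Lam {m : ℕ} (W : Finset (Fin m) → ℝ) : ℝ :=
  ∑ a, ∑ b, (W {a, b} - W {a}) - ((m : ℝ) - 1) * W univ

def SubM {m : ℕ} (W : Finset (Fin m) → ℝ) : Prop :=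
  ∀ U x y, x ≠ y → x ∉ U → y ∉ U → 0 ≤ curv W U x y

lemma SubM.dim {m : ℕ} {W : Finset (Fin m) → ℝ} (h : SubM W) (S : Finset (Fin m)) (y : Fin m) :
    ∀ T : Finset (Fin m), y ∉ S ∪ T →
      W (insert y (S ∪ T)) - W (S ∪ T) ≤ W (insert y S) - W S := by
  intro T
  induction T using Finset.induction_on with
  | empty => simp
  | insert a T ha ih =>
    intro hy
    have hy' : y ∉ S ∪ T := by
      intro hh; apply hy; simp only [Finset.mem_union, Finset.mem_insert] at hh ⊢; tauto
    have hya : y ≠ a := by rintro rfl; apply hy; simp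
    have := ih hy'
    rw [Finset.union_insert]
    by_cases haS : a ∈ S ∪ T
    · rw [Finset.insert_eq_of_mem haS]; exact this
    · have h2 := h (S ∪ T) y a hya hy' haS
      unfold curv at h2
      linarith

lemma SubM.dim' {m : ℕ} {W : Finset (Fin m) → ℝ} (h : SubM W) {S V : Finset (Fin m)} (hSV : S ⊆ V)
    (y : Fin m) (hy : y ∉ V) : W (insert y V) - W V ≤ W (insert y S) - W S := by
  have := h.dim S y V
  rw [Finset.union_eq_right.2 hSV] at this
  exact this hy

lemma SubM.dim'' {m : ℕ} {W : Finset (Fin m) → ℝ} (h : SubM W) {S V : Finset (Fin m)} (hSV : S ⊆ V)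
    (y : Fin m) (hy : y ∈ V → y ∈ S) : W (insert y V) - W V ≤ W (insert y S) - W S := by
  by_cases hyV : y ∈ V
  · rw [Finset.insert_eq_of_mem hyV, Finset.insert_eq_of_mem (hy hyV)]; simp
  · exact h.dim' hSV y hyV

lemma SubM.sum {m : ℕ} {W : Finset (Fin m) → ℝ} (h : SubM W) (S : Finset (Fin m)) :
    ∀ B : Finset (Fin m), W (S ∪ B) - W S ≤ ∑ w ∈ B, (W (insert w S) - W S) := by
  intro B
  induction B using Finset.induction_on with
  | empty => simp
  | insert a B ha ih =>
    rw [Finset.sum_insert ha, Finset.union_insert]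
    have := h.dim'' (S := S) (V := S ∪ B) Finset.subset_union_left a (by
      intro hh; rcases Finset.mem_union.1 hh with h | h
      · exact h
      · exact absurd h ha)
    linarith

lemma lam_tight {m : ℕ} (W : Finset (Fin m) → ℝ) (h : SubM W)
    (x y : Fin m) (hxy : x ≠ y) (ht : W {x, y} = W {x} + W {y}) :
    0 ≤ Lam W := by
  classical
  obtain ⟨B, hB⟩ : ∃ B : Finset (Fin m), B = (univ.erase x).erase y := ⟨_, rfl⟩
  have hxB : x ∉ B := by simp [hB]
  have hyB : y ∉ B := by simp [hB]
  have hsplit : ∀ g : Fin m → ℝ, ∑ a, g a = g x + (g y + ∑ z ∈ B, g z) := by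
    intro g
    rw [hB, Finset.add_sum_erase _ _ (by simp [hxy.symm]), Finset.add_sum_erase _ _ (by simp)]
  have hcard : (B.card : ℝ) = m - 2 := by
    have := hsplit (fun _ => 1)
    simp at this
    linarith
  have hne : ∀ z ∈ B, z ≠ x ∧ z ≠ y := by
    intro z hz; constructor
    · rintro rfl; exact hxB hz
    · rintro rfl; exact hyB hz
  have hU : insert x (insert y B) = univ := by
    ext a; simp [hB]; tauto
  have e1 : ∀ z ∈ B, W {x, y, z} + W {z} ≤ W {x, z} + W {y, z} := by
    intro z hz
    obtain ⟨h1, h2⟩ := hne z hz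
    have := h {z} x y hxy (by simpa using h1.symm) (by simpa using h2.symm)
    unfold curv at this
    linarith
  have e2 : ∀ z ∈ B, W univ - W {x, y, z} ≤ ∑ w ∈ B, (W {z, w} - W {z}) := by
    intro z hz
    have h1 := h.sum {x, y, z} B
    have h2 : ({x, y, z} : Finset (Fin m)) ∪ B = univ := by
      rw [← hU]; ext a; simp; constructor
      · rintro (h|h|h|h) <;> simp [h, hz]
      · tauto
    rw [h2] at h1
    refine h1.trans (Finset.sum_le_sum ?_)
    intro w hw
    have h3 := h.dim'' (S := {z}) (V := {x, y, z}) (by simp) w (by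
      obtain ⟨h4, h5⟩ := hne w hw
      simp [h4, h5])
    rw [Finset.pair_comm z w]
    exact h3
  have e3 : W univ - W {x, y} ≤ ∑ z ∈ B, (W {x, y, z} - W {x, y}) := by
    have h1 := h.sum {x, y} B
    have h2 : ({x, y} : Finset (Fin m)) ∪ B = univ := by
      rw [← hU]; ext a; simp
    rw [h2] at h1
    refine h1.trans (le_of_eq (Finset.sum_congr rfl ?_))
    intro w hw
    have : insert w ({x, y} : Finset (Fin m)) = {x, y, w} := by ext; simp; tauto
    rw [this]
  have e4 : ∑ z ∈ B, ((W {x, y, z} - W {x, y}) + W univ) ≤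
      ∑ z ∈ B, ((W {x, z} - W {x}) + (W {y, z} - W {y}) +
        ((W {z, x} - W {z}) + ((W {z, y} - W {z}) + ∑ w ∈ B, (W {z, w} - W {z})))) := by
    apply Finset.sum_le_sum
    intro z hz
    rw [Finset.pair_comm z x, Finset.pair_comm z y]
    linarith [e1 z hz, e2 z hz]
  rw [Finset.sum_add_distrib, Finset.sum_add_distrib, Finset.sum_add_distrib] at e4
  simp only [Finset.sum_const, nsmul_eq_mul, hcard] at e4
  unfold Lam
  have e5 : ∑ a, ∑ b, (W {a, b} - W {a}) = W {x, y} + (∑ z ∈ B, (W {x, z} - W {x}) +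
    ∑ z ∈ B, (W {y, z} - W {y})) +
    ∑ z ∈ B, ((W {z, x} - W {z}) + ((W {z, y} - W {z}) + ∑ w ∈ B, (W {z, w} - W {z}))) := by
    rw [hsplit]
    simp only [hsplit (fun b => _ - _)]
    rw [Finset.pair_comm y x]
    simp only [Finset.pair_eq_singleton]
    linarith
  rw [e5]
  linarith

lemma lam_const {m : ℕ} (hm : 3 ≤ m) (Q : Finset (Fin m) → ℝ) (hQ : Q ∅ = 0)
    (h0 : ∀ x y, x ≠ y → 0 ≤ curv Q ∅ x y)
    (hc : ∀ U x y, x ≠ y → x ∉ U → y ∉ U → curv Q U x y = curv Q ∅ x y) : 0 ≤ Lam Q := by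
  classical
  obtain ⟨D, hD⟩ : ∃ D : Fin m → Fin m → ℝ, D = fun a b => if a = b then 0 else curv Q ∅ a b :=
    ⟨_, rfl⟩
  have hD0 : ∀ a, D a a = 0 := by intro a; simp [hD]
  have hDs : ∀ a b, D a b = D b a := by
    intro a b; simp only [hD, eq_comm, curv_symm Q ∅ a b]
  have hDn : ∀ a b, 0 ≤ D a b := by
    intro a b; simp only [hD]; split_ifs with h
    · exact le_rfl
    · exact h0 a b h
  have hDc : ∀ U x y, x ≠ y → x ∉ U → y ∉ U → curv Q U x y = D x y := by
    intro U x y h1 h2 h3; rw [hc U x y h1 h2 h3]; simp [hD, h1]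
  have s1 : ∀ (y : Fin m) (V : Finset (Fin m)), y ∉ V →
      Q (insert y V) = Q V + Q {y} - ∑ b ∈ V, D b y := by
    intro y V
    induction V using Finset.induction_on with
    | empty => simp [hQ]
    | insert a V ha ih =>
      intro hy
      have hy' : y ∉ V := fun hh => hy (by simp [hh])
      have hya : y ≠ a := by rintro rfl; apply hy; simp
      have h1 := hDc V y a hya hy' ha
      have h2 := ih hy'
      unfold curv at h1
      rw [Finset.sum_insert ha, hDs a y]
      linarith
  have s2 : ∀ V : Finset (Fin m), 2 * Q V = 2 * ∑ a ∈ V, Q {a} - ∑ a ∈ V, ∑ b ∈ V, D a b := by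
    intro V
    induction V using Finset.induction_on with
    | empty => simp [hQ]
    | insert a V ha ih =>
      rw [s1 a V ha, Finset.sum_insert ha, Finset.sum_insert ha, Finset.sum_insert ha, hD0]
      have : ∑ x ∈ V, ∑ b ∈ insert a V, D x b = ∑ x ∈ V, D x a + ∑ x ∈ V, ∑ b ∈ V, D x b := by
        rw [← Finset.sum_add_distrib]
        exact Finset.sum_congr rfl (fun x _ => Finset.sum_insert ha)
      rw [this]
      have h3 : ∑ b ∈ V, D a b = ∑ b ∈ V, D b a := Finset.sum_congr rfl (fun b _ => hDs a b)
      rw [h3]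
      linarith
  have s3 : ∀ a, ∑ b, (Q {a, b} - Q {a}) = ∑ b, (Q {b} - D a b) - Q {a} := by
    intro a
    rw [← Finset.add_sum_erase _ _ (Finset.mem_univ a),
      ← Finset.add_sum_erase (a := a) _ (fun b => Q {b} - D a b) (Finset.mem_univ a), hD0]
    have : ∀ b ∈ univ.erase a, Q {a, b} - Q {a} = Q {b} - D a b := by
      intro b hb
      have hab : b ≠ a := (Finset.mem_erase.1 hb).1
      have := s1 a {b} (by simpa using hab.symm)
      rw [this]; simp [hDs a b]; ring
    rw [Finset.sum_congr rfl this]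
    simp
  have s4 := s2 univ
  have hDD : 0 ≤ ∑ a, ∑ b, D a b := Finset.sum_nonneg fun a _ => Finset.sum_nonneg fun b _ => hDn a b
  unfold Lam
  rw [Finset.sum_congr rfl (fun a _ => s3 a)]
  simp only [Finset.sum_sub_distrib, Finset.sum_const, nsmul_eq_mul, Finset.card_univ,
    Fintype.card_fin]
  have hm' : (3 : ℝ) ≤ m := by exact_mod_cast hm
  have : Q univ = ∑ a, Q {a} - (∑ a, ∑ b, D a b) / 2 := by linarith
  rw [this]
  nlinarith

lemma ex_q {m : ℕ} (W : Finset (Fin m) → ℝ) : ∃ q : Finset (Fin m) → ℝ, q ∅ = 0 ∧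
    ∀ x y, x ≠ y → ∃ Us : Finset (Fin m), x ∉ Us ∧ y ∉ Us ∧ ∀ U, x ∉ U → y ∉ U →
      curv q U x y = curv W Us x y ∧ curv W Us x y ≤ curv W U x y := by
  classical
  have hex : ∀ x y : Fin m, ∃ Us : Finset (Fin m), (x ∉ Us ∧ y ∉ Us) ∧ ∀ U : Finset (Fin m),
      x ∉ U → y ∉ U → curv W Us x y ≤ curv W U x y := by
    intro x y
    obtain ⟨U, hU, hmin⟩ := Finset.exists_min_image
      (univ.filter (fun U : Finset (Fin m) => x ∉ U ∧ y ∉ U)) (fun U => curv W U x y)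
      ⟨∅, by simp⟩
    refine ⟨U, by simpa using hU, fun V h1 h2 => hmin V (by simp [h1, h2])⟩
  choose Us h1 h2 using hex
  obtain ⟨D, hD⟩ : ∃ D : Fin m → Fin m → ℝ, D = fun a b => curv W (Us a b) a b := ⟨_, rfl⟩
  have hs : ∀ a b, D a b = D b a := by
    intro a b
    simp only [hD]
    apply le_antisymm
    · rw [curv_symm W (Us b a)]; exact h2 a b _ (h1 b a).2 (h1 b a).1
    · rw [curv_symm W (Us a b)]; exact h2 b a _ (h1 a b).2 (h1 a b).1
  refine ⟨fun V => - (∑ a ∈ V, ∑ b ∈ V, D a b) / 2, by simp, ?_⟩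
  intro x y hxy
  refine ⟨Us x y, (h1 x y).1, (h1 x y).2, fun U hx hy => ⟨?_, h2 x y U hx hy⟩⟩
  have hx' : x ∉ insert y U := by simp [hx, hxy]
  have e : curv W (Us x y) x y = D x y := by simp [hD]
  rw [e]
  unfold curv
  simp only [Finset.sum_insert hx, Finset.sum_insert hy, Finset.sum_insert hx',
    Finset.sum_add_distrib]
  rw [hs y x]
  ring

/-- `V` is a set of top-ranked alternatives of the ranking `σ`. -/
def TopS {m : ℕ} (σ : Equiv.Perm (Fin m)) (V : Finset (Fin m)) : Prop :=
  ∀ a ∈ V, ∀ b, b ∉ V → σ a < σ b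

lemma ex_rank {m : ℕ} (key : Fin m → ℕ) :
    ∃ σ : Equiv.Perm (Fin m), ∀ a b, key a < key b → σ a < σ b := by
  refine ⟨(Tuple.sort key).symm, fun a b hab => ?_⟩
  by_contra hcon
  have h1 := Tuple.monotone_sort key (not_lt.1 hcon)
  simp at h1
  omega

lemma ex_top {m : ℕ} (V : Finset (Fin m)) : ∃ σ : Equiv.Perm (Fin m), TopS σ V := by
  classical
  obtain ⟨σ, h⟩ := ex_rank (fun a => if a ∈ V then 0 else 1)
  exact ⟨σ, fun a ha b hb => h a b (by simp [ha, hb])⟩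

def rk {m : ℕ} (V : Finset (Fin m)) : Equiv.Perm (Fin m) := (ex_top V).choose

lemma rk_top {m : ℕ} (V : Finset (Fin m)) : TopS (rk V) V := (ex_top V).choose_spec

lemma ex_xy {m : ℕ} (U : Finset (Fin m)) (x y : Fin m) (hxy : x ≠ y) (hx : x ∉ U) (hy : y ∉ U) :
    ∃ σ : Equiv.Perm (Fin m), TopS σ U ∧ TopS σ (insert x U) ∧ TopS σ (insert x (insert y U)) ∧
      σ x < σ y := by
  classical
  obtain ⟨σ, h⟩ := ex_rank
    (fun a => if a ∈ U then 0 else if a = x then 1 else if a = y then 2 else 3)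
  refine ⟨σ, fun a ha b hb => h a b ?_, fun a ha b hb => h a b ?_, fun a ha b hb => h a b ?_,
    h x y ?_⟩
  · simp only [ha, hb, if_true, if_false]; split_ifs <;> omega
  · simp only [Finset.mem_insert, not_or] at ha hb
    simp only [hb, if_false]
    split_ifs <;> first | omega | tauto
  · simp only [Finset.mem_insert, not_or] at ha hb
    simp only [hb, if_false]
    split_ifs <;> first | omega | tauto
  · simp [hx, hy, hxy, hxy.symm]

lemma ex_first {m : ℕ} (σ : Equiv.Perm (Fin m)) (x y : Fin m) (hxy : σ x < σ y) :
    ∃ τ : Equiv.Perm (Fin m), TopS τ {x} ∧ (∀ a, τ a < τ y ↔ σ a < σ y) := by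
  classical
  obtain ⟨τ, h⟩ := ex_rank
    (fun a => if a = x then 0 else if σ a < σ y then 1 else if a = y then 2 else 3)
  have hne : y ≠ x := by rintro rfl; exact lt_irrefl _ hxy
  refine ⟨τ, fun a ha b hb => h a b ?_, fun a => ⟨fun h1 => ?_, fun h1 => h a y ?_⟩⟩
  · simp only [Finset.mem_singleton] at ha hb
    simp only [ha, hb, if_true, if_false]; split_ifs <;> omega
  · by_contra h2
    rcases eq_or_ne a y with rfl | h3
    · exact lt_irrefl _ h1
    · have : τ y < τ a := h y a (by
        have : a ≠ x := by rintro rfl; exact h2 hxy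
        simp [hne, this, h2, h3])
      exact absurd h1 (not_lt.2 this.le)
  · simp only [hne, lt_irrefl, h1, if_true, if_false]
    split_ifs <;> omega

section basics
variable {n m : ℕ} {F : Profile n m → Fin m → ℝ}

lemma sum_le (hF : IsSDS F) (hsp : Strategyproof F) (R R' : Profile n m) (i : Fin n)
    (hR : ∀ j, j ≠ i → R j = R' j) (V : Finset (Fin m)) (hV : TopS (R i) V) :
    ∑ a ∈ V, F R' a ≤ ∑ a ∈ V, F R a := by
  classical
  by_cases hu : V = univ
  · rw [hu, hF.2, hF.2]
  · have hne : (univ.filter (fun a => a ∉ V)).Nonempty := by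
      by_contra hcon
      apply hu
      ext a
      simp only [Finset.mem_univ, iff_true]
      by_contra ha
      exact hcon ⟨a, by simp [ha]⟩
    obtain ⟨b, hb, hmin⟩ := Finset.exists_min_image _ (fun a => R i a) hne
    simp only [Finset.mem_filter, Finset.mem_univ, true_and] at hb hmin
    have : univ.filter (fun y => R i y < R i b) = V := by
      ext a
      simp only [Finset.mem_filter, Finset.mem_univ, true_and]
      refine ⟨fun h => ?_, fun h => hV a h b hb⟩
      by_contra ha
      exact absurd h (not_lt.2 (hmin a ha))
    have h := hsp R R' i hR b
    rwa [this] at h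

lemma sum_eq_of_top (hF : IsSDS F) (hsp : Strategyproof F) (R R' : Profile n m) (i : Fin n)
    (hR : ∀ j, j ≠ i → R j = R' j) (V : Finset (Fin m)) (hV : TopS (R i) V)
    (hV' : TopS (R' i) V) : ∑ a ∈ V, F R' a = ∑ a ∈ V, F R a :=
  le_antisymm (sum_le hF hsp R R' i hR V hV)
    (sum_le hF hsp R' R i (fun j hj => (hR j hj).symm) V hV')

/-- Probability depends only on the upper contour sets. -/
lemma loc (hF : IsSDS F) (hsp : Strategyproof F) (R R' : Profile n m) (i : Fin n)
    (hR : ∀ j, j ≠ i → R j = R' j) (x : Fin m) (h : ∀ a, R i a < R i x ↔ R' i a < R' i x) :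
    F R' x = F R x := by
  classical
  obtain ⟨U, hU⟩ : ∃ U : Finset (Fin m), U = univ.filter (fun a => R i a < R i x) := ⟨_, rfl⟩
  have hm : ∀ a, a ∈ U ↔ R i a < R i x := by simp [hU]
  have hxU : x ∉ U := by simp [hm]
  have key : ∀ S : Profile n m, (∀ a, a ∈ U ↔ S i a < S i x) →
      TopS (S i) U ∧ TopS (S i) (insert x U) := by
    intro S hS
    constructor
    · intro a ha b hb
      rw [hS] at ha hb
      exact lt_of_lt_of_le ha (not_lt.1 hb)
    · intro a ha b hb
      simp only [Finset.mem_insert, not_or] at ha hb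
      rw [hS] at hb
      have hb' : S i x < S i b :=
        lt_of_le_of_ne (not_lt.1 hb.2) (fun hh => hb.1 ((S i).injective hh).symm)
      rcases ha with rfl | ha
      · exact hb'
      · exact lt_trans ((hS a).1 ha) hb'
  obtain ⟨a1, a2⟩ := key R hm
  obtain ⟨b1, b2⟩ := key R' (fun a => (hm a).trans (h a))
  have e1 := sum_eq_of_top hF hsp R R' i hR U a1 b1
  have e2 := sum_eq_of_top hF hsp R R' i hR _ a2 b2
  rw [Finset.sum_insert hxU, Finset.sum_insert hxU] at e2
  linarith

lemma chg (P : Fin n → Equiv.Perm (Fin m) → Prop) (Φ : Profile n m → ℝ)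
    (h : ∀ (R R' : Profile n m) i, (∀ j, P j (R j)) → (∀ j, P j (R' j)) →
      (∀ j, j ≠ i → R j = R' j) → Φ R = Φ R')
    (R R' : Profile n m) (hR : ∀ j, P j (R j)) (hR' : ∀ j, P j (R' j)) : Φ R = Φ R' := by
  classical
  have : ∀ s : Finset (Fin n), Φ R = Φ (fun j => if j ∈ s then R' j else R j) := by
    intro s
    induction s using Finset.induction_on with
    | empty => simp
    | insert a s ha ih =>
      rw [ih]
      apply h _ _ a
      · intro j; split_ifs; exacts [hR' j, hR j]
      · intro j; split_ifs; exacts [hR' j, hR j]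
      · intro j hj; simp [hj]
  simpa using this univ

/-- The set function of voter `i`. -/
def Wf (F : Profile n m → Fin m → ℝ) (i : Fin n) (R : Profile n m) (V : Finset (Fin m)) : ℝ :=
  ∑ a ∈ V, F (Function.update R i (rk V)) a

lemma Wf_eq (hF : IsSDS F) (hsp : Strategyproof F) (i : Fin n) (R R' : Profile n m)
    (hR : ∀ j, j ≠ i → R j = R' j) (V : Finset (Fin m)) (hV : TopS (R' i) V) :
    Wf F i R V = ∑ a ∈ V, F R' a := by
  unfold Wf
  apply sum_eq_of_top hF hsp _ _ i _ V hV
  · simpa using rk_top V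
  · intro j hj; simp [hj, hR j hj]

lemma Wf_le (hF : IsSDS F) (hsp : Strategyproof F) (i : Fin n) (R R' : Profile n m)
    (hR : ∀ j, j ≠ i → R j = R' j) (V : Finset (Fin m)) :
    ∑ a ∈ V, F R' a ≤ Wf F i R V := by
  unfold Wf
  apply sum_le hF hsp _ _ i _ V
  · simpa using rk_top V
  · intro j hj; simp [hj, hR j hj]

lemma curv_eq (hF : IsSDS F) (hsp : Strategyproof F) (i : Fin n) (R A B : Profile n m)
    (U : Finset (Fin m)) (x y : Fin m) (hxy : x ≠ y) (hx : x ∉ U) (hy : y ∉ U)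
    (hA : ∀ j, j ≠ i → R j = A j) (hB : ∀ j, j ≠ i → R j = B j)
    (a1 : TopS (A i) U) (a2 : TopS (A i) (insert x U))
    (b1 : TopS (B i) (insert y U)) (b2 : TopS (B i) (insert x (insert y U))) :
    curv (Wf F i R) U x y = F A x - F B x := by
  classical
  unfold curv
  rw [Wf_eq hF hsp i R A hA _ a1, Wf_eq hF hsp i R A hA _ a2, Wf_eq hF hsp i R B hB _ b1,
    Wf_eq hF hsp i R B hB _ b2, Finset.sum_insert hx, Finset.sum_insert (a := x)]
  · ring
  · simp [hx, hxy]

/-- Choice of the two profiles. -/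
lemma curv_upd (hF : IsSDS F) (hsp : Strategyproof F) (i : Fin n)
    (U : Finset (Fin m)) (x y : Fin m) (hxy : x ≠ y) (hx : x ∉ U) (hy : y ∉ U) :
    ∃ σ τ : Equiv.Perm (Fin m), σ x < σ y ∧ τ y < τ x ∧ ∀ R : Profile n m,
      curv (Wf F i R) U x y = F (Function.update R i σ) x - F (Function.update R i τ) x ∧
      curv (Wf F i R) U x y = F (Function.update R i τ) y - F (Function.update R i σ) y := by
  obtain ⟨σ, s1, s2, s3, s4⟩ := ex_xy U x y hxy hx hy
  obtain ⟨τ, t1, t2, t3, t4⟩ := ex_xy U y x hxy.symm hy hx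
  refine ⟨σ, τ, s4, t4, fun R => ⟨?_, ?_⟩⟩
  · apply curv_eq hF hsp i R _ _ U x y hxy hx hy
    · intro j hj; simp [hj]
    · intro j hj; simp [hj]
    · simpa using s1
    · simpa using s2
    · simpa using t2
    · rw [Finset.insert_comm]; simpa using t3
  · rw [curv_symm]
    apply curv_eq hF hsp i R _ _ U y x hxy.symm hy hx
    · intro j hj; simp [hj]
    · intro j hj; simp [hj]
    · simpa using t1
    · simpa using t2
    · simpa using s2
    · rw [Finset.insert_comm]; simpa using s3

lemma Wf_subM (hF : IsSDS F) (hsp : Strategyproof F) (i : Fin n) (R : Profile n m) :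
    SubM (Wf F i R) := by
  classical
  intro U x y hxy hx hy
  obtain ⟨τ, t1, t2, t3, t4⟩ := ex_xy U y x hxy.symm hy hx
  have hR : ∀ j, j ≠ i → R j = (Function.update R i τ) j := by intro j hj; simp [hj]
  unfold curv
  have hxy' : x ∉ insert y U := by simp [hx, hxy]
  have e := Wf_le hF hsp i R _ hR (insert x U)
  rw [Wf_eq hF hsp i R _ hR U (by simpa using t1), Wf_eq hF hsp i R _ hR (insert y U) (by simpa using t2),
    Wf_eq hF hsp i R _ hR (insert x (insert y U)) (by rw [Finset.insert_comm]; simpa using t3),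
    Finset.sum_insert hxy']
  rw [Finset.sum_insert hx] at e
  linarith

/-- K1a, single change, `x` above `y`. -/
lemma k1a_single (hF : IsSDS F) (hsp : Strategyproof F) (i j : Fin n) (hij : j ≠ i)
    (U : Finset (Fin m)) (x y : Fin m) (hxy : x ≠ y) (hx : x ∉ U) (hy : y ∉ U)
    (R R' : Profile n m) (hR : ∀ k, k ≠ j → R k = R' k)
    (h1 : R j x < R j y) (h2 : R' j x < R' j y) :
    curv (Wf F i R) U x y = curv (Wf F i R') U x y := by
  classical
  obtain ⟨σ, τ, -, -, hst⟩ := curv_upd hF hsp i U x y hxy hx hy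
  -- changes of `j` preserving the upper set of `y`
  have A : ∀ S S' : Profile n m, (∀ k, k ≠ j → S k = S' k) →
      (∀ a, S j a < S j y ↔ S' j a < S' j y) →
      curv (Wf F i S) U x y = curv (Wf F i S') U x y := by
    intro S S' hS h
    rw [(hst S).2, (hst S').2]
    congr 1
    · symm
      refine loc hF hsp _ _ j ?_ y ?_
      · intro k hk; simp only [Function.update_apply]; rw [hS k hk]
      · intro a; simpa [hij] using h a
    · symm
      refine loc hF hsp _ _ j ?_ y ?_
      · intro k hk; simp only [Function.update_apply]; rw [hS k hk]
      · intro a; simpa [hij] using h a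
  have B : ∀ S S' : Profile n m, (∀ k, k ≠ j → S k = S' k) →
      (∀ a, S j a < S j x ↔ S' j a < S' j x) →
      curv (Wf F i S) U x y = curv (Wf F i S') U x y := by
    intro S S' hS h
    rw [(hst S).1, (hst S').1]
    congr 1
    · symm
      refine loc hF hsp _ _ j ?_ x ?_
      · intro k hk; simp only [Function.update_apply]; rw [hS k hk]
      · intro a; simpa [hij] using h a
    · symm
      refine loc hF hsp _ _ j ?_ x ?_
      · intro k hk; simp only [Function.update_apply]; rw [hS k hk]
      · intro a; simpa [hij] using h a
  obtain ⟨ρ, r1, r2⟩ := ex_first (R j) x y h1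
  obtain ⟨ρ', r1', r2'⟩ := ex_first (R' j) x y h2
  have top0 : ∀ ρ : Equiv.Perm (Fin m), TopS ρ {x} → ∀ a, ¬ ρ a < ρ x := by
    intro ρ h a h'
    rcases eq_or_ne a x with rfl | hne
    · exact lt_irrefl _ h'
    · exact absurd h' (not_lt.2 (h x (by simp) a (by simpa using hne)).le)
  rw [A R (Function.update R j ρ) (by intro k hk; simp [hk]) (by intro a; simp [r2]),
    A R' (Function.update R' j ρ') (by intro k hk; simp [hk]) (by intro a; simp [r2'])]
  apply B
  · intro k hk; simp [hk, hR k hk]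
  · intro a; simp [top0 _ r1, top0 _ r1']

lemma k1a_single' (hF : IsSDS F) (hsp : Strategyproof F) (i j : Fin n) (hij : j ≠ i)
    (U : Finset (Fin m)) (x y : Fin m) (hxy : x ≠ y) (hx : x ∉ U) (hy : y ∉ U)
    (R R' : Profile n m) (hR : ∀ k, k ≠ j → R k = R' k)
    (h : R j x < R j y ↔ R' j x < R' j y) :
    curv (Wf F i R) U x y = curv (Wf F i R') U x y := by
  by_cases h1 : R j x < R j y
  · exact k1a_single hF hsp i j hij U x y hxy hx hy R R' hR h1 (h.1 h1)
  · have h2 := fun hh => h1 (h.2 hh)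
    rw [curv_symm, curv_symm (Wf F i R')]
    apply k1a_single hF hsp i j hij U y x hxy.symm hy hx R R' hR
    · exact lt_of_le_of_ne (not_lt.1 h1) (fun hh => hxy ((R j).injective hh).symm)
    · exact lt_of_le_of_ne (not_lt.1 h2) (fun hh => hxy ((R' j).injective hh).symm)

lemma Wf_congr (i : Fin n) (R R' : Profile n m) (h : ∀ j, j ≠ i → R j = R' j) :
    Wf F i R = Wf F i R' := by
  have : ∀ σ, Function.update R i σ = Function.update R' i σ := by
    intro σ; ext1 j
    rcases eq_or_ne j i with rfl | hj
    · simp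
    · simp [hj, h j hj]
  unfold Wf; simp only [this]

lemma k1a (hF : IsSDS F) (hsp : Strategyproof F) (i : Fin n)
    (U : Finset (Fin m)) (x y : Fin m) (hxy : x ≠ y) (hx : x ∉ U) (hy : y ∉ U)
    (R R' : Profile n m) (h : ∀ j, j ≠ i → (R j x < R j y ↔ R' j x < R' j y)) :
    curv (Wf F i R) U x y = curv (Wf F i R') U x y := by
  refine chg (fun j σ => j ≠ i → (σ x < σ y ↔ R' j x < R' j y))
    (fun R => curv (Wf F i R) U x y) ?_ R R' h (fun j _ => Iff.rfl)
  intro S S' j h1 h2 h3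
  rcases eq_or_ne j i with rfl | hj
  · rw [Wf_congr j S S' h3]
  · exact k1a_single' hF hsp i j hj U x y hxy hx hy S S' h3 ((h1 j hj).trans (h2 j hj).symm)

/-- K1: curvature differences do not depend on the other voters. -/
lemma k1 (hF : IsSDS F) (hsp : Strategyproof F) (i : Fin n)
    (U U' : Finset (Fin m)) (x y : Fin m) (hxy : x ≠ y) (hx : x ∉ U) (hy : y ∉ U)
    (hx' : x ∉ U') (hy' : y ∉ U') (R R' : Profile n m) :
    curv (Wf F i R) U x y - curv (Wf F i R) U' x y =
      curv (Wf F i R') U x y - curv (Wf F i R') U' x y := by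
  classical
  have main : ∀ (j : Fin n), j ≠ i → ∀ S S' : Profile n m, (∀ k, k ≠ j → S k = S' k) →
      S j x < S j y → S' j y < S' j x →
      curv (Wf F i S) U x y - curv (Wf F i S) U' x y =
      curv (Wf F i S') U x y - curv (Wf F i S') U' x y := by
    intro j hj S S' hS h1 h2
    obtain ⟨α, β, ha, hb, hab⟩ := curv_upd hF hsp j ∅ x y hxy (by simp) (by simp)
    have gen : ∀ V : Finset (Fin m), x ∉ V → y ∉ V → ∃ c : ℝ,
      curv (Wf F i S) V x y - curv (Wf F i S') V x y = 
        curv (Wf F j (Function.update S i α)) ∅ x y - curv (Wf F j (Function.update S i β)) ∅ x y := by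
      intro V hxV hyV
      refine ⟨0, ?_⟩
      obtain ⟨σ, τ, hs, ht, hst⟩ := curv_upd hF hsp i V x y hxy hxV hyV
      have e1 : curv (Wf F i S) V x y = curv (Wf F i (Function.update S j α)) V x y := by
        apply k1a hF hsp i V x y hxy hxV hyV
        intro k hk
        rcases eq_or_ne k j with rfl | hkj
        · simp [h1, ha]
        · simp [hkj]
      have e2 : curv (Wf F i S') V x y = curv (Wf F i (Function.update S j β)) V x y := by
        apply k1a hF hsp i V x y hxy hxV hyV
        intro k hk
        rcases eq_or_ne k j with rfl | hkj
        · simp [h2.not_gt, hb.not_gt]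
        · simp [hkj, hS k hkj]
      have e3 : curv (Wf F j (Function.update S i α)) ∅ x y =
          curv (Wf F j (Function.update S i σ)) ∅ x y := by
        apply k1a hF hsp j ∅ x y hxy (by simp) (by simp)
        intro k hk
        rcases eq_or_ne k i with rfl | hki
        · simp [hs, ha]
        · simp [hki]
      have e4 : curv (Wf F j (Function.update S i β)) ∅ x y =
          curv (Wf F j (Function.update S i τ)) ∅ x y := by
        apply k1a hF hsp j ∅ x y hxy (by simp) (by simp)
        intro k hk
        rcases eq_or_ne k i with rfl | hki
        · simp [ht.not_gt, hb.not_gt]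
        · simp [hki]
      rw [e1, e2, e3, e4, (hst _).1, (hst _).1, (hab _).1, (hab _).1]
      simp only [Function.update_comm hj]
      ring
    obtain ⟨-, g1⟩ := gen U hx hy
    obtain ⟨-, g2⟩ := gen U' hx' hy'
    linarith
  refine chg (fun _ _ => True) (fun R => curv (Wf F i R) U x y - curv (Wf F i R) U' x y)
    ?_ R R' (fun _ => trivial) (fun _ => trivial)
  intro S S' j _ _ hS
  rcases eq_or_ne j i with rfl | hj
  · rw [Wf_congr j S S' hS]
  · by_cases h1 : S j x < S j y <;> by_cases h2 : S' j x < S' j y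
    · rw [k1a_single' hF hsp i j hj U x y hxy hx hy S S' hS (by simp [h1, h2]),
        k1a_single' hF hsp i j hj U' x y hxy hx' hy' S S' hS (by simp [h1, h2])]
    · exact main j hj S S' hS h1
        (lt_of_le_of_ne (not_lt.1 h2) (fun hh => hxy ((S' j).injective hh).symm))
    · exact (main j hj S' S (fun k hk => (hS k hk).symm) h2
        (lt_of_le_of_ne (not_lt.1 h1) (fun hh => hxy ((S j).injective hh).symm))).symm
    · rw [k1a_single' hF hsp i j hj U x y hxy hx hy S S' hS (by simp only [h1, h2]),
        k1a_single' hF hsp i j hj U' x y hxy hx' hy' S S' hS (by simp only [h1, h2])]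

/-- The unanimous set function. -/
def Gf (F : Profile n m → Fin m → ℝ) (V : Finset (Fin m)) : ℝ :=
  ∑ a ∈ V, F (fun _ => rk V) a

lemma Gf_eq (hF : IsSDS F) (hsp : Strategyproof F) (V : Finset (Fin m)) (R : Profile n m)
    (h : ∀ i, TopS (R i) V) : Gf F V = ∑ a ∈ V, F R a := by
  refine chg (fun _ σ => TopS σ V) (fun R => ∑ a ∈ V, F R a) ?_ _ R (fun _ => rk_top V) h
  intro S S' i h1 h2 h3
  exact (sum_eq_of_top hF hsp S S' i h3 V (h1 i) (h2 i)).symm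

lemma Gf_curv (hF : IsSDS F) (hsp : Strategyproof F) (x y : Fin m) (hxy : x ≠ y) :
    ∃ P : Fin n → Profile n m, ∀ U : Finset (Fin m), x ∉ U → y ∉ U →
      curv (Gf F) U x y = ∑ i, curv (Wf F i (P i)) U x y := by
  classical
  obtain ⟨σ0, -, -, -, s0⟩ := ex_xy ∅ x y hxy (by simp) (by simp)
  obtain ⟨τ0, -, -, -, t0⟩ := ex_xy ∅ y x hxy.symm (by simp) (by simp)
  refine ⟨fun i j => if j < i then σ0 else τ0, fun U hx hy => ?_⟩
  obtain ⟨σ, s1, s2, s3, s4⟩ := ex_xy U x y hxy hx hy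
  obtain ⟨τ, t1, t2, t3, t4⟩ := ex_xy U y x hxy.symm hy hx
  let H : ℕ → Profile n m := fun k j => if j.val < k then σ else τ
  have e1 : ∀ i : Fin n, curv (Wf F i (fun j => if j < i then σ0 else τ0)) U x y =
      F (H (i + 1)) x - F (H i) x := by
    intro i
    rw [k1a hF hsp i U x y hxy hx hy _ (H i)]
    · apply curv_eq hF hsp i _ _ _ U x y hxy hx hy
      · intro j hj
        have : j.val ≠ i.val := fun h => hj (Fin.ext h)
        simp only [H]
        congr 1
        apply propext
        omega
      · intro j hj; rfl
      · simpa [H] using s1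
      · simpa [H] using s2
      · simpa [H] using t2
      · rw [Finset.insert_comm]; simpa [H] using t3
    · intro j hj
      simp only [H, Fin.lt_def]
      split_ifs
      · simp [s0, s4]
      · simp [t0.not_gt, t4.not_gt]
  rw [Finset.sum_congr rfl (fun i _ => e1 i),
    Fin.sum_univ_eq_sum_range (fun k => F (H (k + 1)) x - F (H k) x) n,
    Finset.sum_range_sub (fun k => F (H k) x)]
  have hn : H n = fun _ => σ := by ext1 j; simp [H]
  have h0 : H 0 = fun _ => τ := by ext1 j; simp [H]
  rw [hn, h0]
  unfold curv
  rw [Gf_eq hF hsp U (fun _ => σ) (fun _ => s1), Gf_eq hF hsp (insert x U) (fun _ => σ) (fun _ => s2),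
    Gf_eq hF hsp (insert y U) (fun _ => τ) (fun _ => t2),
    Gf_eq hF hsp (insert x (insert y U)) (fun _ => τ) (fun _ => by rw [Finset.insert_comm]; exact t3),
    Finset.sum_insert hx, Finset.sum_insert (a := x)]
  · ring
  · simp [hx, hxy]

end basics

section final
variable {n m : ℕ} {F : Profile n m → Fin m → ℝ}

lemma dictProb_sum (R : Profile n m) (i : Fin n) (t : Fin m) (ht : ∀ y, R i t ≤ R i y)
    (V : Finset (Fin m)) : ∑ a ∈ V, dictProb R i a = if t ∈ V then 1 else 0 := by
  classical
  have : ∀ a, dictProb R i a = if a = t then 1 else 0 := by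
    intro a
    unfold dictProb
    congr 1
    apply propext
    constructor
    · intro h; exact (R i).injective (le_antisymm (h t) (ht a))
    · rintro rfl; exact ht
  simp [this]

lemma ex_best (hm : 3 ≤ m) (σ : Equiv.Perm (Fin m)) : ∃ t, ∀ y, σ t ≤ σ y := by
  refine ⟨σ.symm ⟨0, by omega⟩, fun y => ?_⟩
  rw [Equiv.apply_symm_apply, Fin.le_def]
  exact Nat.zero_le _

lemma ex_zero (hm : 3 ≤ m) (hF : IsSDS F) (hsp : Strategyproof F) (hrd : RandDictDegree F 0)
    (i : Fin n) : ∃ (R : Profile n m) (x y : Fin m), x ≠ y ∧ curv (Wf F i R) ∅ x y = 0 := by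
  classical
  by_contra hcon
  push Not at hcon
  have hpos : ∀ (R : Profile n m) (x y : Fin m), x ≠ y → 0 < curv (Wf F i R) ∅ x y :=
    fun R x y h => lt_of_le_of_ne (Wf_subM hF hsp i R ∅ x y h (by simp) (by simp))
      (hcon R x y h).symm
  obtain ⟨γ0, hγ0, hle⟩ : ∃ γ > 0, ∀ (R : Profile n m) (x y : Fin m), x ≠ y →
      γ ≤ curv (Wf F i R) ∅ x y := by
    obtain ⟨p, hp, hmin⟩ := Finset.exists_min_image
      (univ.filter (fun p : Profile n m × Fin m × Fin m => p.2.1 ≠ p.2.2))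
      (fun p => curv (Wf F i p.1) ∅ p.2.1 p.2.2)
      ⟨(fun _ => 1, ⟨0, by omega⟩, ⟨1, by omega⟩), by simp⟩
    refine ⟨_, hpos p.1 p.2.1 p.2.2 (by simpa using hp), fun R x y h => ?_⟩
    exact hmin (R, x, y) (by simpa using h)
  obtain ⟨γ, hγ, hγ1, hγ2⟩ : ∃ γ : ℝ, 0 < γ ∧ γ < 1 ∧ γ ≤ γ0 :=
    ⟨min γ0 (1/2), by positivity, by
      have := min_le_right γ0 (1/2); linarith, min_le_left _ _⟩
  have h1γ : 0 < 1 - γ := by linarith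
  have hW0 : ∀ R, Wf F i R ∅ = 0 := by intro R; simp [Wf]
  -- key inequality
  have htop : ∀ (R : Profile n m) (t : Fin m), (∀ y, R i t ≤ R i y) → TopS (R i) {t} := by
    intro R t ht a ha b hb
    simp only [Finset.mem_singleton] at ha hb
    subst ha
    exact lt_of_le_of_ne (ht b) (fun h => hb ((R i).injective h).symm)
  have hdec : DecomposesAt F γ := by
    refine ⟨fun R x => dictProb R i x, fun R x => (F R x - γ * dictProb R i x) / (1 - γ),
      ⟨fun j => if j = i then 1 else 0, ?_, by simp, by simp⟩, ⟨?_, ?_⟩, ?_, ?_⟩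
    · intro j; dsimp only; split_ifs <;> norm_num
    · intro R x
      apply div_nonneg _ h1γ.le
      by_cases hx : ∀ y, R i x ≤ R i y
      · simp only [dictProb, hx, implies_true, if_true]
        obtain ⟨y, hy⟩ : ∃ y : Fin m, x ≠ y := by
          by_cases h : x = ⟨0, by omega⟩
          · exact ⟨⟨1, by omega⟩, by simp [h]⟩
          · exact ⟨_, h⟩
        have e1 := hle R x y hy
        unfold curv at e1
        have e2 := Wf_eq hF hsp i R R (fun _ _ => rfl) {x} (htop R x hx)
        have e3 := Wf_le hF hsp i R (Function.update R i (rk {y})) (by intro j hj; simp [hj]) {x, y}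
        have e4 := Wf_eq hF hsp i R (Function.update R i (rk {y})) (by intro j hj; simp [hj]) {y}
          (by simpa using rk_top _)
        rw [Finset.sum_pair hy] at e3
        simp only [Finset.sum_singleton, hW0, insert_empty_eq] at *
        have e5 := hF.1 (Function.update R i (rk {y})) x
        linarith
      · simp only [dictProb, hx, if_false]
        have := hF.1 R x
        linarith
    · intro R
      obtain ⟨t, ht⟩ := ex_best hm (R i)
      rw [← Finset.sum_div, Finset.sum_sub_distrib, ← Finset.mul_sum, dictProb_sum R i t ht, hF.2]
      simp [h1γ.ne']
    · intro R R' j hR x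
      have hbase := hsp R R' j hR x
      dsimp only
      rw [← Finset.sum_div, ← Finset.sum_div]
      apply div_le_div_of_nonneg_right _ h1γ.le
      rw [Finset.sum_sub_distrib, Finset.sum_sub_distrib, ← Finset.mul_sum, ← Finset.mul_sum]
      rcases eq_or_ne j i with rfl | hj
      · obtain ⟨t, ht⟩ := ex_best hm (R j)
        obtain ⟨y, hy⟩ := ex_best hm (R' j)
        obtain ⟨V, hV⟩ : ∃ V, V = univ.filter (fun y => R j y < R j x) := ⟨_, rfl⟩
        rw [← hV] at hbase ⊢
        rw [dictProb_sum R j t ht, dictProb_sum R' j y hy]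
        have hVt : TopS (R j) V := by
          intro a ha b hb
          simp only [hV, Finset.mem_filter, Finset.mem_univ, true_and] at ha hb
          exact lt_of_lt_of_le ha (not_lt.1 hb)
        by_cases hyV : y ∈ V
        · simp only [hyV, if_true]; split_ifs <;> linarith
        · simp only [hyV, if_false]
          split_ifs with htV
          · have hyt : t ≠ y := by rintro rfl; exact hyV htV
            have e1 := Wf_eq hF hsp j R R (fun _ _ => rfl) V hVt
            have e2 := Wf_le hF hsp j R R' hR (insert y V)
            have e3 := Wf_eq hF hsp j R R' hR {y} (htop R' y hy)
            have e4 := (Wf_subM hF hsp j R).dim' (S := {t}) (V := V) (by simpa using htV) y hyV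
            have e5 := hle R t y hyt
            unfold curv at e5
            rw [Finset.sum_insert hyV] at e2
            rw [Finset.pair_comm] at e4
            simp only [Finset.sum_singleton, hW0, insert_empty_eq] at *
            linarith
          · linarith
      · have : ∀ a, dictProb R' i a = dictProb R i a := by
          intro a; unfold dictProb; rw [hR i hj.symm]
        simp only [this]
        linarith
    · intro R x
      field_simp
      ring
  have := hrd.2.2.2 γ hγ.le hγ1.le hdec
  linarith

lemma curv_sub' (A B : Finset (Fin m) → ℝ) (U : Finset (Fin m)) (x y : Fin m) :
    curv (fun V => A V - B V) U x y = curv A U x y - curv B U x y := by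
  unfold curv; ring

lemma curv_sum' (A : Fin n → Finset (Fin m) → ℝ) (U : Finset (Fin m)) (x y : Fin m) :
    curv (fun V => ∑ i, A i V) U x y = ∑ i, curv (A i) U x y := by
  unfold curv; simp only [Finset.sum_add_distrib, Finset.sum_sub_distrib]

lemma Lam_sub' (A B : Finset (Fin m) → ℝ) : Lam (fun V => A V - B V) = Lam A - Lam B := by
  unfold Lam; simp only [Finset.sum_sub_distrib]; ring

lemma Lam_sum' (A : Fin n → Finset (Fin m) → ℝ) : Lam (fun V => ∑ i, A i V) = ∑ i, Lam (A i) := by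
  unfold Lam
  simp only [Finset.sum_sub_distrib, Finset.mul_sum]
  congr 1
  congr 1
  · conv_rhs => rw [Finset.sum_comm]
    apply Finset.sum_congr rfl
    intro a _
    rw [Finset.sum_comm]
  · conv_rhs => rw [Finset.sum_comm]
    apply Finset.sum_congr rfl
    intro a _
    rw [Finset.sum_comm]

lemma Lam_G (hm : 3 ≤ m) (hF : IsSDS F) (hsp : Strategyproof F) (hrd : RandDictDegree F 0) :
    0 ≤ Lam (Gf F) := by
  classical
  let R0 : Profile n m := fun _ => 1
  choose q hq0 hq using fun i : Fin n => ex_q (Wf F i R0)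
  let W : Fin n → Finset (Fin m) → ℝ := fun i V => Wf F i R0 V - q i V
  have hWc : ∀ i U x y, curv (W i) U x y = curv (Wf F i R0) U x y - curv (q i) U x y :=
    fun i U x y => curv_sub' _ _ U x y
  have hW : ∀ i, 0 ≤ Lam (W i) := by
    intro i
    obtain ⟨R, x, y, hxy, h0⟩ := ex_zero hm hF hsp hrd i
    apply lam_tight (W i) _ x y hxy
    · obtain ⟨Us, hx, hy, h⟩ := hq i x y hxy
      have e1 := (h ∅ (by simp) (by simp)).1
      have e2 := (h ∅ (by simp) (by simp)).2
      have e3 := k1 hF hsp i ∅ Us x y hxy (by simp) (by simp) hx hy R R0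
      have e4 := Wf_subM hF hsp i R Us x y hxy hx hy
      have e5 := hWc i ∅ x y
      have e6 : W i ∅ = 0 := by simp [W, hq0, Wf]
      have e7 : curv (W i) ∅ x y = 0 := by linarith
      unfold curv at e7
      simp only [insert_empty_eq] at e7
      linarith
    · intro U x y hxy hx hy
      obtain ⟨Us, -, -, h⟩ := hq i x y hxy
      rw [hWc]
      have := h U hx hy
      linarith [this.1, this.2]
  let Q : Finset (Fin m) → ℝ := fun V => Gf F V - ∑ i, W i V
  have hQc : ∀ x y, x ≠ y → ∃ c : ℝ, 0 ≤ c ∧ ∀ U, x ∉ U → y ∉ U → curv Q U x y = c := by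
    intro x y hxy
    obtain ⟨P, hP⟩ := Gf_curv hF hsp x y hxy
    choose Us hx' hy' h using fun i => hq i x y hxy
    refine ⟨∑ i, curv (Wf F i (P i)) (Us i) x y, Finset.sum_nonneg fun i _ =>
      Wf_subM hF hsp i (P i) _ x y hxy (hx' i) (hy' i), fun U hx hy => ?_⟩
    have e : curv Q U x y = curv (Gf F) U x y - ∑ i, curv (W i) U x y := by
      rw [← curv_sum', ← curv_sub']
    rw [e, hP U hx hy, ← Finset.sum_sub_distrib]
    apply Finset.sum_congr rfl
    intro i _
    rw [hWc, (h i U hx hy).1]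
    have := k1 hF hsp i U (Us i) x y hxy hx hy (hx' i) (hy' i) (P i) R0
    linarith
  have hQ : 0 ≤ Lam Q := by
    apply lam_const hm Q
    · simp [Q, W, Gf, Wf, hq0]
    · intro x y hxy
      obtain ⟨c, hc, h⟩ := hQc x y hxy
      rw [h ∅ (by simp) (by simp)]; exact hc
    · intro U x y hxy hx hy
      obtain ⟨c, hc, h⟩ := hQc x y hxy
      rw [h ∅ (by simp) (by simp), h U hx hy]
  have e : Lam Q = Lam (Gf F) - ∑ i, Lam (W i) := by
    rw [← Lam_sum', ← Lam_sub']
  have : 0 ≤ ∑ i, Lam (W i) := Finset.sum_nonneg fun i _ => hW i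
  linarith

end final

/-- For `m ≥ 3`, no strategyproof `0`-randomly dictatorial SDS is
`β`-ex post efficient for any `β < 1/m`: some Pareto-dominated alternative
receives probability at least `1/m` in some profile. -/
theorem zeroRandDict_not_expost (n m : ℕ) (hm : 3 ≤ m)
    (F : Profile n m → Fin m → ℝ) (hF : IsSDS F) (hsp : Strategyproof F)
    (hrd : RandDictDegree F 0) :
    ∃ (R : Profile n m) (x : Fin m),
      ParetoDominated R x ∧ 1 / (m : ℝ) ≤ F R x := by
  classical
  have hL := Lam_G hm hF hsp hrd
  have hG1 : Gf F univ = 1 := hF.2 _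
  unfold Lam at hL
  rw [hG1] at hL
  have hm' : (3 : ℝ) ≤ m := by exact_mod_cast hm
  by_contra hcon
  push Not at hcon
  have key : ∀ x y : Fin m, x ≠ y → Gf F {x, y} - Gf F {x} < 1 / m := by
    intro x y hxy
    obtain ⟨σ, -, s2, s3, s4⟩ := ex_xy ∅ x y hxy (by simp) (by simp)
    simp only [insert_empty_eq] at s2 s3
    rw [Gf_eq hF hsp _ (fun _ => σ) (fun _ => s2), Gf_eq hF hsp _ (fun _ => σ) (fun _ => s3),
      Finset.sum_pair hxy, Finset.sum_singleton]
    have := hcon (fun _ => σ) y ⟨x, fun _ => s4⟩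
    linarith
  have hrow : ∀ x : Fin m, ∑ y, (Gf F {x, y} - Gf F {x}) < ((m : ℝ) - 1) * (1 / m) := by
    intro x
    rw [← Finset.add_sum_erase _ _ (Finset.mem_univ x)]
    have h1 : ∑ y ∈ univ.erase x, (Gf F {x, y} - Gf F {x}) < ∑ y ∈ univ.erase x, (1 / (m : ℝ)) := by
      apply Finset.sum_lt_sum_of_nonempty
      · rw [← Finset.card_pos, Finset.card_erase_of_mem (Finset.mem_univ x)]
        simp; omega
      · intro y hy
        exact key x y (Finset.mem_erase.1 hy).1.symm
    rw [Finset.sum_const, Finset.card_erase_of_mem (Finset.mem_univ x), Finset.card_univ,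
      Fintype.card_fin, nsmul_eq_mul, Nat.cast_sub (by omega)] at h1
    simpa using h1
  have htot : ∑ x : Fin m, ∑ y, (Gf F {x, y} - Gf F {x}) < ∑ x : Fin m, ((m : ℝ) - 1) * (1 / m) := by
    apply Finset.sum_lt_sum_of_nonempty
    · exact ⟨⟨0, by omega⟩, Finset.mem_univ _⟩
    · intro x _; exact hrow x
  rw [Finset.sum_const, Finset.card_univ, Fintype.card_fin, nsmul_eq_mul] at htot
  have : (m : ℝ) * (((m : ℝ) - 1) * (1 / m)) = m - 1 := by field_simp
  linarith
end
end

section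
/- Let m ≥ 3. No SDS that can be represented as a convex combination of duples is β-ex post efficient for any β < 1/m; that is, for every SDS f of the form f = ∑_k λ_k f_k with λ_k ≥ 0, ∑_k λ_k = 1, and each f_k a duple, there exist a profile R and an alternative x that is Pareto-dominated in R such that f(R,x) ≥ 1/m. -/
open Finset

noncomputable section

/-! helper -/

lemma duple_sum {n m : ℕ} {g : Profile n m → Fin m → ℝ} (hs : IsSDS g) {a b : Fin m}
    (hab : a ≠ b) (h0 : ∀ R z, z ≠ a → z ≠ b → g R z = 0) (R : Profile n m) :
    g R a + g R b = 1 := by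
  rw [← hs.2 R, ← Finset.sum_pair hab]
  apply Finset.sum_subset (Finset.subset_univ _)
  intro z _ hz
  simp only [Finset.mem_insert, Finset.mem_singleton, not_or] at hz
  exact h0 R z hz.1 hz.2

lemma duple_above {n m : ℕ} {g : Profile n m → Fin m → ℝ} {a b : Fin m}
    (h0 : ∀ R z, z ≠ a → z ≠ b → g R z = 0) (R R' : Profile n m) (i : Fin n)
    (h : R i a < R i b) :
    ∑ y ∈ univ.filter (fun y => R i y < R i b), g R' y = g R' a := by
  apply Finset.sum_eq_single_of_mem a (by simpa using h)
  intro z hz hza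
  refine h0 R' z hza ?_
  rintro rfl
  simp at hz

lemma duple_step {n m : ℕ} {g : Profile n m → Fin m → ℝ} (hs : IsSDS g)
    (hsp : Strategyproof g) {a b : Fin m}
    (hab : a ≠ b) (h0 : ∀ R z, z ≠ a → z ≠ b → g R z = 0) (R R' : Profile n m) (i : Fin n)
    (hj : ∀ j, j ≠ i → R j = R' j) (h : R i a < R i b ∨ R' i b < R' i a) :
    g R' a ≤ g R a := by
  rcases h with h | h
  · have := hsp R R' i hj b
    rwa [duple_above h0 R R' i h, duple_above h0 R R i h] at this
  · have h0' : ∀ R z, z ≠ b → z ≠ a → g R z = 0 := fun R z h1 h2 => h0 R z h2 h1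
    have := hsp R' R i (fun j hji => (hj j hji).symm) a
    rw [duple_above h0' R' R i h, duple_above h0' R' R' i h] at this
    have h1 := duple_sum hs hab h0 R
    have h2 := duple_sum hs hab h0 R'
    linarith

lemma duple_mono {n m : ℕ} {g : Profile n m → Fin m → ℝ} (hs : IsSDS g)
    (hsp : Strategyproof g) {a b : Fin m}
    (hab : a ≠ b) (h0 : ∀ R z, z ≠ a → z ≠ b → g R z = 0) (R R' : Profile n m)
    (h : ∀ i, R i a < R i b ∨ R' i b < R' i a) :
    g R' a ≤ g R a := by
  have key : ∀ S : Finset (Fin n), g R' a ≤ g (fun i => if i ∈ S then R i else R' i) a := by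
    intro S
    induction S using Finset.induction_on with
    | empty => simp
    | insert i S hi ih =>
      refine ih.trans ?_
      apply duple_step hs hsp hab h0 _ _ i
      · intro j hj
        simp [hj]
      · simpa [hi] using h i
  simpa using key univ

/-- Ranking with `y` first and `x` second. -/
def topTwo {m : ℕ} (hm : 3 ≤ m) (y x : Fin m) : Equiv.Perm (Fin m) :=
  (Equiv.swap y ⟨0, by omega⟩).trans
    (Equiv.swap ((Equiv.swap y ⟨0, by omega⟩) x) ⟨1, by omega⟩)

lemma topTwo_snd {m : ℕ} (hm : 3 ≤ m) (y x : Fin m) :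
    topTwo hm y x x = ⟨1, by omega⟩ := by
  simp [topTwo]

lemma topTwo_fst {m : ℕ} (hm : 3 ≤ m) (y x : Fin m) (h : y ≠ x) :
    topTwo hm y x y = ⟨0, by omega⟩ := by
  simp only [topTwo, Equiv.trans_apply, Equiv.swap_apply_left]
  apply Equiv.swap_apply_of_ne_of_ne
  · intro h'
    apply h
    apply (Equiv.swap y (⟨0, by omega⟩ : Fin m)).injective
    rw [← h', Equiv.swap_apply_left]
  · simp

lemma topTwo_lt_fst {m : ℕ} (hm : 3 ≤ m) (y x z : Fin m) (h : y ≠ x) (hz : z ≠ y) :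
    topTwo hm y x y < topTwo hm y x z := by
  have h1 := topTwo_fst hm y x h
  have h2 : topTwo hm y x z ≠ topTwo hm y x y := fun e => hz ((topTwo hm y x).injective e)
  rw [h1] at h2 ⊢
  generalize topTwo hm y x z = t at *
  rcases t with ⟨t, ht⟩
  simp only [ne_eq, Fin.mk.injEq, Fin.mk_lt_mk] at *
  omega

lemma topTwo_lt_snd {m : ℕ} (hm : 3 ≤ m) (y x z : Fin m) (h : y ≠ x) (hz : z ≠ y)
    (hzx : z ≠ x) : topTwo hm y x x < topTwo hm y x z := by
  have h1 := topTwo_lt_fst hm y x z h hz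
  have h2 : topTwo hm y x z ≠ topTwo hm y x x := fun e => hzx ((topTwo hm y x).injective e)
  rw [topTwo_fst hm y x h] at h1
  rw [topTwo_snd hm y x] at h2 ⊢
  generalize topTwo hm y x z = t at *
  rcases t with ⟨t, ht⟩
  simp only [ne_eq, Fin.mk.injEq, Fin.mk_lt_mk] at *
  omega

lemma half_bound {n m : ℕ} (hm : 3 ≤ m) {g : Profile n m → Fin m → ℝ} (hs : IsSDS g)
    (hsp : Strategyproof g) {a b : Fin m}
    (hab : a ≠ b) (h0 : ∀ R z, z ≠ a → z ≠ b → g R z = 0) :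
    g (fun _ => topTwo hm b a) a + ((m : ℝ) - 2) * g (fun _ => topTwo hm a b) a ≤
      ∑ y ∈ univ.erase a, g (fun _ => topTwo hm y a) a := by
  have hb : b ∈ univ.erase a := by simp [hab.symm]
  rw [← Finset.add_sum_erase _ _ hb]
  gcongr
  have hc : ((((univ : Finset (Fin m)).erase a).erase b).card : ℝ) = (m : ℝ) - 2 := by
    rw [Finset.card_erase_of_mem hb, Finset.card_erase_of_mem (Finset.mem_univ _),
      Finset.card_univ, Fintype.card_fin, Nat.sub_sub, Nat.cast_sub (by omega)]
    norm_num
  rw [← hc, ← nsmul_eq_mul]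
  apply Finset.card_nsmul_le_sum
  intro y hy
  simp only [Finset.mem_erase, Finset.mem_univ, and_true] at hy
  apply duple_mono hs hsp hab h0
  intro i
  left
  exact topTwo_lt_snd hm y a b hy.2 hy.1.symm hab.symm

lemma duple_total {n m : ℕ} (hm : 3 ≤ m) {g : Profile n m → Fin m → ℝ} (hd : IsDuple g) :
    (m : ℝ) - 1 ≤ ∑ x, ∑ y ∈ univ.erase x, g (fun _ => topTwo hm y x) x := by
  obtain ⟨hs, hsp, a, b, h0⟩ := hd
  have hm' : (3 : ℝ) ≤ m := by exact_mod_cast hm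
  have hnn : ∀ x ∈ (univ : Finset (Fin m)),
      0 ≤ ∑ y ∈ univ.erase x, g (fun _ => topTwo hm y x) x :=
    fun x _ => Finset.sum_nonneg fun y _ => hs.1 _ _
  by_cases hab : a = b
  · subst hab
    refine le_trans ?_ (Finset.single_le_sum hnn (Finset.mem_univ a))
    have h1 : ∀ R, g R a = 1 := by
      intro R
      rw [← hs.2 R]
      symm
      apply Finset.sum_eq_single_of_mem a (Finset.mem_univ _)
      intro z _ hz
      exact h0 R z hz hz
    simp only [h1, Finset.sum_const, nsmul_eq_mul, mul_one]
    rw [Finset.card_erase_of_mem (Finset.mem_univ _), Finset.card_univ, Fintype.card_fin,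
      Nat.cast_sub (by omega)]
    norm_num
  · have h0' : ∀ R z, z ≠ b → z ≠ a → g R z = 0 := fun R z h1 h2 => h0 R z h2 h1
    refine le_trans ?_ (Finset.sum_le_sum_of_subset_of_nonneg (Finset.subset_univ {a, b})
      (fun x hx _ => hnn x hx))
    rw [Finset.sum_pair hab]
    have e1 := half_bound hm hs hsp hab h0
    have e2 := half_bound hm hs hsp (Ne.symm hab) h0'
    have s1 := duple_sum hs hab h0 (fun _ => topTwo hm a b)
    have s2 := duple_sum hs hab h0 (fun _ => topTwo hm b a)
    have hmon : g (fun _ => topTwo hm b a) a ≤ g (fun _ => topTwo hm a b) a := by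
      apply duple_mono hs hsp hab h0
      intro i
      left
      exact topTwo_lt_fst hm a b b hab (Ne.symm hab)
    nlinarith [mul_nonneg (sub_nonneg.2 hm') (sub_nonneg.2 hmon)]

/-- For `m ≥ 3`, no convex combination of duples is `β`-ex post
efficient for any `β < 1/m`: some Pareto-dominated alternative receives
probability at least `1/m` in some profile. -/
theorem dupleMix_not_expost (n m : ℕ) (hm : 3 ≤ m)
    (F : Profile n m → Fin m → ℝ) (hmix : MixOf IsDuple F) :
    ∃ (R : Profile n m) (x : Fin m),
      ParetoDominated R x ∧ 1 / (m : ℝ) ≤ F R x := by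
  obtain ⟨K, w, g, hw, hw1, hg, hF⟩ := hmix
  by_contra hcon
  push Not at hcon
  have hm' : (3 : ℝ) ≤ m := by exact_mod_cast hm
  have hlow : (m : ℝ) - 1 ≤ ∑ x, ∑ y ∈ univ.erase x, F (fun _ => topTwo hm y x) x := by
    have e : ∑ x, ∑ y ∈ univ.erase x, F (fun _ => topTwo hm y x) x =
        ∑ k, w k * ∑ x, ∑ y ∈ univ.erase x, g k (fun _ => topTwo hm y x) x := by
      simp only [hF, Finset.mul_sum]
      rw [Finset.sum_comm]
      refine Finset.sum_congr rfl fun x _ => ?_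
      rw [Finset.sum_comm]
    rw [e]
    calc (m : ℝ) - 1 = ∑ k, w k * ((m : ℝ) - 1) := by rw [← Finset.sum_mul, hw1, one_mul]
      _ ≤ _ := Finset.sum_le_sum fun k _ =>
        mul_le_mul_of_nonneg_left (duple_total hm (hg k)) (hw k)
  have hne : (univ : Finset (Fin m)).Nonempty := ⟨⟨0, by omega⟩, Finset.mem_univ _⟩
  have hc : ∀ x : Fin m, (((univ : Finset (Fin m)).erase x).card : ℝ) = (m : ℝ) - 1 := by
    intro x
    rw [Finset.card_erase_of_mem (Finset.mem_univ _), Finset.card_univ, Fintype.card_fin,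
      Nat.cast_sub (by omega)]
    norm_num
  have hup : ∑ x, ∑ y ∈ univ.erase x, F (fun _ => topTwo hm y x) x <
      ∑ x : Fin m, ∑ y ∈ univ.erase x, 1 / (m : ℝ) := by
    apply Finset.sum_lt_sum_of_nonempty hne
    intro x _
    apply Finset.sum_lt_sum_of_nonempty
    · rw [← Finset.card_pos]
      have h := hc x
      have : (0 : ℝ) < (((univ : Finset (Fin m)).erase x).card : ℝ) := by rw [h]; linarith
      exact_mod_cast this
    · intro y hy
      simp only [Finset.mem_erase, Finset.mem_univ, and_true] at hy
      exact hcon _ _ ⟨y, fun _ => topTwo_lt_fst hm y x x hy (Ne.symm hy)⟩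
  simp only [Finset.sum_const, nsmul_eq_mul, hc, Finset.card_univ, Fintype.card_fin] at hup
  have : (m : ℝ) * (((m : ℝ) - 1) * (1 / (m : ℝ))) = (m : ℝ) - 1 := by
    field_simp
  linarith
end
end

section
/- Let m ≥ 3. No 0-randomly dictatorial SDS that can be represented as a convex combination of unilaterals is β-ex post efficient for any β < 1/m; that is, for every such SDS f there exist a profile R and an alternative x that is Pareto-dominated in R such that f(R,x) ≥ 1/m. -/
open Finset

noncomputable section

/-- `U` is an initial segment (a set of top-ranked alternatives) of `P`. -/
def InitSeg {m : ℕ} (P : Equiv.Perm (Fin m)) (U : Finset (Fin m)) : Prop :=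
  ∀ x ∈ U, ∀ y, P y ≤ P x → y ∈ U

lemma exists_ord {m : ℕ} (U V : Finset (Fin m)) (hUV : U ⊆ V) :
    ∃ P : Equiv.Perm (Fin m), InitSeg P U ∧ InitSeg P V := by
  classical
  let f : Fin m → ℕ := fun x => if x ∈ U then 0 else if x ∈ V then 1 else 2
  have hmon := Tuple.monotone_sort f
  have key : ∀ x y, (Tuple.sort f).symm y ≤ (Tuple.sort f).symm x → f y ≤ f x := by
    intro x y h
    have := hmon h
    simpa using this
  refine ⟨(Tuple.sort f).symm, ?_, ?_⟩
  · intro x hx y hy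
    have h := key x y hy
    by_contra hyU
    simp only [f, hx, hyU, if_true, if_false] at h
    split_ifs at h <;> omega
  · intro x hx y hy
    have h := key x y hy
    by_contra hyV
    have hyU : y ∉ U := fun h => hyV (hUV h)
    simp only [f, hx, hyU, hyV, if_true, if_false] at h
    split_ifs at h <;> omega

lemma init_le {m : ℕ} (h g : Fin m → ℝ) (h1 : ∑ x, h x = ∑ x, g x)
    (P : Equiv.Perm (Fin m))
    (hs : ∀ x, ∑ y ∈ univ.filter (fun y => P y < P x), g y ≤
      ∑ y ∈ univ.filter (fun y => P y < P x), h y)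
    (U : Finset (Fin m)) (hU : InitSeg P U) : ∑ x ∈ U, g x ≤ ∑ x ∈ U, h x := by
  classical
  by_cases hne : (Uᶜ).Nonempty
  · obtain ⟨x, hx, hmin⟩ := Finset.exists_min_image Uᶜ (fun x => P x) hne
    have : U = univ.filter (fun y => P y < P x) := by
      ext y
      simp only [mem_filter, mem_univ, true_and]
      constructor
      · intro hy
        by_contra hlt
        exact (mem_compl.1 hx) (hU y hy x (not_lt.1 hlt))
      · intro hy
        by_contra hyU
        exact absurd (hmin y (mem_compl.2 hyU)) (not_le.2 hy)
    rw [this]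
    exact hs x
  · have : U = univ := by
      rw [Finset.not_nonempty_iff_eq_empty] at hne
      exact (Finset.compl_eq_empty_iff U).1 hne
    rw [this, h1]

lemma exists_q {m : ℕ} (h : Equiv.Perm (Fin m) → Fin m → ℝ) (h0 : ∀ P x, 0 ≤ h P x)
    (h1 : ∀ P, ∑ x, h P x = 1)
    (hs : ∀ P P' x, ∑ y ∈ univ.filter (fun y => P y < P x), h P' y ≤
      ∑ y ∈ univ.filter (fun y => P y < P x), h P y) :
    ∃ q : Finset (Fin m) → ℝ, (∀ P U, ∑ x ∈ U, h P x ≤ q U) ∧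
      (∀ P U, InitSeg P U → ∑ x ∈ U, h P x = q U) ∧
      (∀ U V, U ⊆ V → q U ≤ q V) ∧
      (∀ U V, q (U ∪ V) + q (U ∩ V) ≤ q U + q V) ∧ q ∅ = 0 ∧ q univ = 1 := by
  classical
  choose o ho using fun U : Finset (Fin m) => exists_ord U U subset_rfl
  have A : ∀ P P' U, InitSeg P U → ∑ x ∈ U, h P' x ≤ ∑ x ∈ U, h P x := fun P P' U hU =>
    init_le (h P) (h P') ((h1 P).trans (h1 P').symm) P (hs P P') U hU
  have B : ∀ P U, ∑ x ∈ U, h P x ≤ ∑ x ∈ U, h (o U) x := fun P U => A _ _ _ (ho U).1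
  have C : ∀ P U, InitSeg P U → ∑ x ∈ U, h P x = ∑ x ∈ U, h (o U) x := fun P U hU =>
    le_antisymm (B P U) (A _ _ _ hU)
  refine ⟨fun U => ∑ x ∈ U, h (o U) x, B, C, ?_, ?_, by simp, h1 _⟩
  · intro U V hUV
    exact (Finset.sum_le_sum_of_subset_of_nonneg hUV (fun x _ _ => h0 _ x)).trans (B _ V)
  · intro U V
    obtain ⟨P, hP1, hP2⟩ := exists_ord (U ∩ V) (U ∪ V)
      (Finset.inter_subset_left.trans Finset.subset_union_left)
    have e1 := C P _ hP1
    have e2 := C P _ hP2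
    have e3 := Finset.sum_union_inter (s₁ := U) (s₂ := V) (f := h P)
    have b1 := B P U
    have b2 := B P V
    simp only
    linarith

lemma q_dim {m : ℕ} (q : Finset (Fin m) → ℝ) (hmono : ∀ U V, U ⊆ V → q U ≤ q V)
    (hsub : ∀ U V, q (U ∪ V) + q (U ∩ V) ≤ q U + q V) (U V : Finset (Fin m)) (hUV : U ⊆ V)
    (z : Fin m) : q (insert z V) - q V ≤ q (insert z U) - q U := by
  classical
  by_cases hz : z ∈ V
  · have := hmono U (insert z U) (Finset.subset_insert _ _)
    rw [Finset.insert_eq_of_mem hz]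
    linarith
  · have := hsub (insert z U) V
    have e1 : insert z U ∪ V = insert z V := by
      rw [Finset.insert_union, Finset.union_eq_right.2 hUV]
    have e2 : insert z U ∩ V = U := by
      rw [Finset.insert_inter_of_notMem hz, Finset.inter_eq_left.2 hUV]
    rw [e1, e2] at this
    linarith

lemma q_tele {m : ℕ} (q : Finset (Fin m) → ℝ) (hmono : ∀ U V, U ⊆ V → q U ≤ q V)
    (hsub : ∀ U V, q (U ∪ V) + q (U ∩ V) ≤ q U + q V) (W Z : Finset (Fin m)) :
    q (Z ∪ W) - q W ≤ ∑ z ∈ Z, (q (insert z W) - q W) := by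
  classical
  induction Z using Finset.induction_on with
  | empty => simp
  | insert z Z hz ih =>
    rw [Finset.sum_insert hz, Finset.insert_union]
    have := q_dim q hmono hsub W (Z ∪ W) Finset.subset_union_right z
    linarith

lemma key_sum {m : ℕ} (q : Finset (Fin m) → ℝ) (hmono : ∀ U V, U ⊆ V → q U ≤ q V)
    (hsub : ∀ U V, q (U ∪ V) + q (U ∩ V) ≤ q U + q V) (hu : q univ = 1)
    (a b : Fin m) (hab : a ≠ b) (hc : q {a} + q {b} ≤ q {a, b}) :
    (m : ℝ) - 1 ≤ ∑ y, ∑ x, (q {x, y} - q {y}) := by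
  classical
  have dim := q_dim q hmono hsub
  set D : Fin m → Fin m → ℝ := fun x y => q {x, y} - q {y} with hD
  set Z : Finset (Fin m) := univ \ {a, b} with hZ
  set t := q {a, b} with ht
  set u : Fin m → ℝ := fun z => q {z, a, b} - t with hu'
  have hcard : (Z.card : ℝ) = (m : ℝ) - 2 := by
    have h := Finset.card_sdiff_add_card_eq_card (Finset.subset_univ ({a, b} : Finset (Fin m)))
    rw [Finset.card_pair hab, Finset.card_univ, Fintype.card_fin] at h
    have : ((Z.card + 2 : ℕ) : ℝ) = m := by exact_mod_cast h
    push_cast at this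
    linarith
  have split : ∀ f : Fin m → ℝ, ∑ x, f x = f a + f b + ∑ z ∈ Z, f z := by
    intro f
    rw [← Finset.sum_sdiff (Finset.subset_univ ({a, b} : Finset (Fin m))), Finset.sum_pair hab]
    ring
  have hZu : Z ∪ {a, b} = univ := Finset.sdiff_union_of_subset (Finset.subset_univ _)
  have total : ∑ y, ∑ x, D x y = D a b + D b a +
      ∑ z ∈ Z, (D a z + D b z + D z a + D z b + ∑ x ∈ Z, D x z) := by
    rw [split]
    simp only [split (fun x => D x _)]
    simp only [Finset.sum_add_distrib]
    have d0 : ∀ x, D x x = 0 := fun x => by simp [hD]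
    rw [d0, d0]
    ring
  have pair : D a b + D b a = 2 * t - q {a} - q {b} := by
    simp only [hD, ht, Finset.pair_comm b a]
    ring
  have hpos : ∀ U z, q U ≤ q (insert z U) := fun U z => hmono _ _ (Finset.subset_insert _ _)
  have per : ∀ z ∈ Z, 1 + u z ≤ D a z + D b z + D z a + D z b + ∑ x ∈ Z, D x z := by
    intro z hz
    have i1 : 1 - t - u z ≤ ∑ x ∈ Z, D x z := by
      have h := q_tele q hmono hsub {z, a, b} Z
      have e : Z ∪ {z, a, b} = univ := by
        apply Finset.eq_univ_of_forall
        intro x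
        have := Finset.mem_univ x
        rw [← hZu] at this
        simp only [Finset.mem_union, Finset.mem_insert, Finset.mem_singleton] at this ⊢
        tauto
      rw [e, hu] at h
      have h2 : ∑ x ∈ Z, (q (insert x {z, a, b}) - q {z, a, b}) ≤ ∑ x ∈ Z, D x z := by
        apply Finset.sum_le_sum
        intro x _
        exact dim {z} {z, a, b} (by simp) x
      simp only [hu']
      linarith
    have i2 := dim {z} {z, b} (by simp) a
    have e1 : ({a, z, b} : Finset (Fin m)) = {z, a, b} := Finset.insert_comm _ _ _
    have i3 := dim {b} {a, b} (by simp) z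
    have i4 := dim {a} {a, b} (by simp) z
    have e2 : ({b, z} : Finset (Fin m)) = {z, b} := Finset.pair_comm _ _
    have e3 : ({a, z} : Finset (Fin m)) = {z, a} := Finset.pair_comm _ _
    simp only [hD, hu', e2, e3] at i1 ⊢
    rw [e1, e3] at i2
    linarith
  have fin1 := Finset.sum_le_sum per
  have fin2 := q_tele q hmono hsub {a, b} Z
  rw [hZu, hu] at fin2
  rw [Finset.sum_add_distrib, Finset.sum_const, nsmul_eq_mul, hcard] at fin1
  have fin3 : 1 - t ≤ ∑ z ∈ Z, u z := fin2
  change _ ≤ ∑ y, ∑ x, D x y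
  rw [total, pair]
  linarith

lemma dict_part {m : ℕ} (hm : 2 ≤ m) (h : Equiv.Perm (Fin m) → Fin m → ℝ)
    (h0 : ∀ P x, 0 ≤ h P x)
    (q : Finset (Fin m) → ℝ) (hq1 : ∀ P U, ∑ x ∈ U, h P x ≤ q U)
    (hq2 : ∀ P U, InitSeg P U → ∑ x ∈ U, h P x = q U)
    (hmono : ∀ U V, U ⊆ V → q U ≤ q V)
    (hsub : ∀ U V, q (U ∪ V) + q (U ∩ V) ≤ q U + q V)
    (γ : ℝ) (hγ : ∀ a b, a ≠ b → γ ≤ q {a} + q {b} - q {a, b}) (T : Equiv.Perm (Fin m) → Fin m → ℝ)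
    (hT : T = fun P x => if ∀ y, P x ≤ P y then 1 else 0) :
    (∀ P x, γ * T P x ≤ h P x) ∧
    ∀ P P' x, ∑ y ∈ univ.filter (fun y => P y < P x), (h P' y - γ * T P' y) ≤
      ∑ y ∈ univ.filter (fun y => P y < P x), (h P y - γ * T P y) := by
  classical
  have top : ∀ P : Equiv.Perm (Fin m), ∃ z, (∀ y, P z ≤ P y) ∧ ∀ x, T P x = if x = z then 1 else 0 := by
    intro P
    let z := P.symm ⟨0, by omega⟩
    have hz : ∀ y, P z ≤ P y := by
      intro y
      simp only [z, Equiv.apply_symm_apply]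
      exact Fin.mk_le_of_le_val (Nat.zero_le _)
    refine ⟨z, hz, fun x => ?_⟩
    rw [hT]
    have : (∀ y, P x ≤ P y) ↔ x = z := by
      constructor
      · intro hx
        exact P.injective (le_antisymm (hx z) (hz x))
      · rintro rfl
        exact hz
    simp only [this]
  have hz1 : ∀ (P : Equiv.Perm (Fin m)) z, (∀ y, P z ≤ P y) → h P z = q {z} := by
    intro P z hz
    rw [← hq2 P {z}, Finset.sum_singleton]
    intro x hx y hy
    rw [Finset.mem_singleton] at hx ⊢
    subst hx
    exact P.injective (le_antisymm hy (hz y))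
  refine ⟨?_, ?_⟩
  · intro P x
    obtain ⟨z, hz, hTz⟩ := top P
    rw [hTz]
    split_ifs with hx
    · subst hx
      have : Nontrivial (Fin m) := Fin.nontrivial_iff_two_le.2 hm
      obtain ⟨y, hy⟩ := exists_ne x
      have h1 := hγ x y hy.symm
      have h2 := hmono {y} {x, y} (by simp)
      rw [hz1 P x hz]
      linarith
    · simpa using h0 P x
  · intro P P' x
    set U := univ.filter (fun y => P y < P x) with hU
    have hinit : InitSeg P U := by
      intro v hv y hy
      simp only [hU, mem_filter, mem_univ, true_and] at hv ⊢
      exact lt_of_le_of_lt hy hv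
    obtain ⟨z, hz, hTz⟩ := top P
    obtain ⟨z', hz', hTz'⟩ := top P'
    by_cases hne : U.Nonempty
    · have hzU : z ∈ U := by
        obtain ⟨v, hv⟩ := hne
        exact hinit v hv z (hz v)
      have s1 : ∑ y ∈ U, T P y = 1 := by
        simp only [hTz]
        simp [hzU]
      have s2 : ∑ y ∈ U, T P' y = if z' ∈ U then 1 else 0 := by
        simp only [hTz']
        simp
      have e := hq2 P U hinit
      rw [Finset.sum_sub_distrib, Finset.sum_sub_distrib, ← Finset.mul_sum, ← Finset.mul_sum,
        s1, s2, e]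
      split_ifs with hzz
      · linarith [hq1 P' U]
      · have hne' : z ≠ z' := fun hh => hzz (hh ▸ hzU)
        have b1 := hq1 P' (insert z' U)
        rw [Finset.sum_insert hzz, hz1 P' z' hz'] at b1
        have b2 := q_dim q hmono hsub {z} U (by simpa using hzU) z'
        have b3 := hγ z' z hne'.symm
        linarith
    · rw [Finset.not_nonempty_iff_eq_empty] at hne
      simp [hne]

/-- For `m ≥ 3`, no `0`-randomly dictatorial SDS that is a convex
combination of unilaterals is `β`-ex post efficient for any `β < 1/m`: some
Pareto-dominated alternative receives probability at least `1/m` in some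
profile. -/
theorem unilateralMix_zeroRandDict_not_expost (n m : ℕ) (hm : 3 ≤ m)
    (F : Profile n m → Fin m → ℝ) (hF : IsSDS F) (hsp : Strategyproof F)
    (hmix : MixOf IsUnilateral F) (hrd : RandDictDegree F 0) :
    ∃ (R : Profile n m) (x : Fin m),
      ParetoDominated R x ∧ 1 / (m : ℝ) ≤ F R x := by
  classical
  obtain ⟨K, w, g, hw, hw1, hg, hFeq⟩ := hmix
  choose v hv using fun k => (hg k).2.2
  let h : Fin K → Equiv.Perm (Fin m) → Fin m → ℝ := fun k P => g k (fun _ => P)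
  have hgh : ∀ k R, g k R = h k (R (v k)) := fun k R => hv k _ _ rfl
  have h0 : ∀ k P x, 0 ≤ h k P x := fun k P x => (hg k).1.1 _ x
  have h1 : ∀ k P, ∑ x, h k P x = 1 := fun k P => (hg k).1.2 _
  have hs : ∀ k P P' x, ∑ y ∈ univ.filter (fun y => P y < P x), h k P' y ≤
      ∑ y ∈ univ.filter (fun y => P y < P x), h k P y := by
    intro k P P' x
    have hh := (hg k).2.1 (fun _ => P) (Function.update (fun _ => P) (v k) P') (v k)
      (fun j hj => by simp [Function.update_of_ne hj]) x
    rw [hgh k (Function.update (fun _ => P) (v k) P')] at hh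
    simpa [h] using hh
  choose q hq1 hq2 hmono hsub hq0 hqu using fun k => exists_q (h k) (h0 k) (h1 k) (hs k)
  by_cases crit : ∃ k, 0 < w k ∧ ∀ a b, a ≠ b → q k {a, b} < q k {a} + q k {b}
  · exfalso
    obtain ⟨k, hk, hab⟩ := crit
    obtain ⟨γ, hγ0, hγ1, hγ⟩ : ∃ γ : ℝ, 0 < γ ∧ γ ≤ 1 / 2 ∧
        ∀ a b, a ≠ b → γ ≤ q k {a} + q k {b} - q k {a, b} := by
      have hne : (univ : Finset (Fin m × Fin m)).Nonempty :=
        ⟨(⟨0, by omega⟩, ⟨0, by omega⟩), mem_univ _⟩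
      obtain ⟨p, _, hp⟩ := Finset.exists_min_image univ (fun p : Fin m × Fin m =>
        if p.1 = p.2 then (1 / 2 : ℝ) else
          min (1 / 2) (q k {p.1} + q k {p.2} - q k {p.1, p.2})) hne
      refine ⟨_, ?_, ?_, fun a b hne' => (hp (a, b) (mem_univ _)).trans ?_⟩
      · split_ifs with hpp
        · norm_num
        · exact lt_min (by norm_num) (by linarith [hab _ _ hpp])
      · split_ifs with hpp
        · exact le_rfl
        · exact min_le_left _ _
      · simp only [hne', if_false]
        exact min_le_right _ _
    let T : Equiv.Perm (Fin m) → Fin m → ℝ := fun P x => if ∀ y, P x ≤ P y then 1 else 0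
    obtain ⟨d1, d2⟩ := dict_part (by omega) (h k) (h0 k) (q k) (hq1 k) (hq2 k) (hmono k) (hsub k)
      γ hγ T rfl
    have hwk1 : w k ≤ 1 := by
      rw [← hw1]
      exact Finset.single_le_sum (fun j _ => hw j) (mem_univ k)
    set c := γ * w k with hc
    have hc0 : 0 < c := mul_pos hγ0 hk
    have hc1 : c ≤ 1 / 2 := by nlinarith
    have hTsum : ∀ P, ∑ x, T P x = 1 := by
      intro P
      have : ∀ x, T P x = if x = P.symm ⟨0, by omega⟩ then 1 else 0 := by
        intro x
        have : (∀ y, P x ≤ P y) ↔ x = P.symm ⟨0, by omega⟩ := by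
          constructor
          · intro hx
            apply P.injective
            have := hx (P.symm ⟨0, by omega⟩)
            rw [Equiv.apply_symm_apply] at this ⊢
            exact le_antisymm this (Fin.mk_le_of_le_val (Nat.zero_le _))
          · rintro rfl y
            rw [Equiv.apply_symm_apply]
            exact Fin.mk_le_of_le_val (Nat.zero_le _)
        simp only [T, this]
      simp [this]
    let d : Profile n m → Fin m → ℝ := fun R x => T (R (v k)) x
    have hrest : ∀ R x, F R x - c * d R x =
        ∑ j, w j * (h j (R (v j)) x - if j = k then γ * T (R (v k)) x else 0) := by
      intro R x
      simp only [mul_sub, Finset.sum_sub_distrib, hFeq, hgh, d, hc]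
      simp
      ring
    have hdec : DecomposesAt F c := by
      refine ⟨d, fun R x => (F R x - c * d R x) / (1 - c), ?_, ⟨?_, ?_⟩, ?_, ?_⟩
      · refine ⟨fun i => if i = v k then 1 else 0, fun i => by dsimp only; split_ifs <;> norm_num, by simp,
          fun R x => ?_⟩
        simp only [ite_mul, one_mul, zero_mul, Finset.sum_ite_eq', mem_univ, if_true]
        simp only [d, T, dictProb]
      · intro R x
        refine div_nonneg ?_ (by linarith)
        rw [hrest]
        refine Finset.sum_nonneg fun j _ => mul_nonneg (hw j) ?_
        split_ifs with hj
        · subst hj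
          linarith [d1 (R (v j)) x]
        · simpa using h0 j _ x
      · intro R
        rw [← Finset.sum_div, Finset.sum_sub_distrib, ← Finset.mul_sum, hF.2, hTsum,
          mul_one, div_self (by linarith)]
      · intro R R' i hR x
        simp only [← Finset.sum_div]
        refine div_le_div_of_nonneg_right ?_ (by linarith)
        simp only [hrest]
        rw [Finset.sum_comm, Finset.sum_comm (s := univ.filter _)]
        refine Finset.sum_le_sum fun j _ => ?_
        rw [← Finset.mul_sum, ← Finset.mul_sum]
        refine mul_le_mul_of_nonneg_left ?_ (hw j)
        by_cases hji : v j = i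
        · by_cases hjk : j = k
          · subst hjk
            simp only [if_true]
            rw [← hji]
            exact d2 _ _ _
          · simp only [hjk, if_false, sub_zero]
            rw [← hji]
            exact hs j _ _ _
        · by_cases hjk : j = k
          · subst hjk
            rw [hR _ hji]
          · simp only [hjk, if_false]
            rw [hR _ hji]
      · intro R x
        have : (1 - c) ≠ 0 := by linarith
        field_simp
        ring
    have := hrd.2.2.2 c hc0.le (by linarith) hdec
    linarith
  · push Not at crit
    have hT : ∀ k, w k * ((m : ℝ) - 1) ≤ w k * ∑ y, ∑ x, (q k {x, y} - q k {y}) := by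
      intro k
      rcases (hw k).eq_or_lt with h' | h'
      · rw [← h']
        simp
      · obtain ⟨a, b, hab, hle⟩ := crit k h'
        exact mul_le_mul_of_nonneg_left
          (key_sum (q k) (hmono k) (hsub k) (hqu k) a b hab hle) h'.le
    have hsum := Finset.sum_le_sum (fun k (_ : k ∈ univ) => hT k)
    rw [← Finset.sum_mul, hw1, one_mul] at hsum
    set E : Fin m → Fin m → ℝ := fun x y => ∑ k, w k * (q k {x, y} - q k {y}) with hE
    have hsw : ∑ k, w k * ∑ y, ∑ x, (q k {x, y} - q k {y}) = ∑ y, ∑ x, E x y := by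
      simp only [hE, Finset.mul_sum]
      rw [Finset.sum_comm]
      refine Finset.sum_congr rfl fun y _ => ?_
      rw [Finset.sum_comm]
    rw [hsw] at hsum
    obtain ⟨x, y, hxy, hEx⟩ : ∃ x y, x ≠ y ∧ 1 / (m : ℝ) ≤ E x y := by
      by_contra hcon
      push Not at hcon
      have hmpos : (0 : ℝ) < m := by exact_mod_cast (by omega : 0 < m)
      have hle : ∀ y, ∑ x, E x y < ∑ x, if x = y then 0 else 1 / (m : ℝ) := by
        intro y
        have : Nontrivial (Fin m) := Fin.nontrivial_iff_two_le.2 (by omega)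
        obtain ⟨x, hx⟩ := exists_ne y
        refine Finset.sum_lt_sum (fun x _ => ?_) ⟨x, mem_univ _, ?_⟩
        · split_ifs with hx
          · subst hx
            simp [hE]
          · exact (hcon x y hx).le
        · rw [if_neg hx]
          exact hcon x y hx
      have hval : ∀ y : Fin m, (∑ x, if x = y then 0 else 1 / (m : ℝ)) = 1 - 1 / m := by
        intro y
        have : ∀ x, (if x = y then 0 else 1 / (m : ℝ)) = 1 / m - if x = y then 1 / (m : ℝ) else 0 := by
          intro x
          split_ifs <;> simp
        simp only [this, Finset.sum_sub_distrib]
        simp [hmpos.ne']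
      have hlt : ∑ y, ∑ x, E x y < ∑ y : Fin m, (1 - 1 / (m : ℝ)) :=
        Finset.sum_lt_sum_of_nonempty ⟨⟨0, by omega⟩, mem_univ _⟩
          (fun y _ => by rw [← hval y]; exact hle y)
      rw [Finset.sum_const, Finset.card_univ, Fintype.card_fin, nsmul_eq_mul, mul_sub,
        mul_one_div_cancel hmpos.ne', mul_one] at hlt
      linarith
    obtain ⟨P, hP1, hP2⟩ := exists_ord ({y} : Finset (Fin m)) {x, y} (by simp)
    refine ⟨fun _ => P, x, ⟨y, fun _ => ?_⟩, ?_⟩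
    · by_contra hlt
      have := hP1 y (by simp) x (not_lt.1 hlt)
      exact hxy (by simpa using this)
    · refine hEx.trans (le_of_eq ?_)
      rw [hFeq]
      refine Finset.sum_congr rfl fun k _ => ?_
      rw [← hq2 k P _ hP1, ← hq2 k P _ hP2, Finset.sum_pair hxy, Finset.sum_singleton,
        add_sub_cancel_right]
end
end

section
/- Let m ≥ 3. Every point voting SDS that is 0-randomly dictatorial and 1/m-ex post efficient is the uniform lottery, i.e., its scoring vector satisfies a_k = 1/(mn) for all k ∈ {1,…,m}. -/
open Finset

noncomputable section

lemma key_sum_s16 {m : ℕ} (a : ℕ → ℝ) (mono : ∀ k l : ℕ, k ≤ l → l < m → a l ≤ a k)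
    (σ τ : Equiv.Perm (Fin m)) (x : Fin m) :
    ∑ y ∈ univ.filter (fun y => σ y < σ x), a (τ y : ℕ) ≤
      ∑ y ∈ univ.filter (fun y => σ y < σ x), a (σ y : ℕ) := by
  set v := a (σ x : ℕ) with hv
  set S := univ.filter (fun y => σ y < σ x) with hS
  have h1 : ∑ y ∈ S, (a (τ y : ℕ) - v) ≤ ∑ y, max 0 (a (τ y : ℕ) - v) := by
    refine (Finset.sum_le_sum (fun y _ => le_max_right 0 _)).trans ?_
    exact Finset.sum_le_sum_of_subset_of_nonneg (Finset.subset_univ _)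
      (fun y _ _ => le_max_left 0 _)
  have h2 : ∑ y, max 0 (a (τ y : ℕ) - v) = ∑ y, max 0 (a (σ y : ℕ) - v) := by
    rw [Equiv.sum_comp τ (fun k : Fin m => max 0 (a (k : ℕ) - v)),
      Equiv.sum_comp σ (fun k : Fin m => max 0 (a (k : ℕ) - v))]
  have h3 : ∑ y, max 0 (a (σ y : ℕ) - v) = ∑ y ∈ S, (a (σ y : ℕ) - v) := by
    rw [hS, Finset.sum_filter]
    refine Finset.sum_congr rfl (fun y _ => ?_)
    split_ifs with h
    · refine max_eq_right ?_
      have := mono (σ y) (σ x) (le_of_lt h) (σ x).2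
      linarith
    · refine max_eq_left ?_
      have := mono (σ x) (σ y) (not_lt.mp h) (σ y).2
      linarith
  rw [h2, h3] at h1
  simp only [Finset.sum_sub_distrib] at h1
  linarith

lemma pv_sp {n m : ℕ} (pv : PointVoting n m) : Strategyproof (pvVal pv) := by
  intro R R' i h x
  simp only [pvVal]
  rw [Finset.sum_comm, Finset.sum_comm (s := univ.filter (fun y => R i y < R i x)) (t := univ) (f := fun y j => pv.a (R j y : ℕ))]
  refine Finset.sum_le_sum (fun j _ => ?_)
  by_cases hj : j = i
  · subst hj
    exact key_sum_s16 pv.a pv.mono (R j) (R' j) x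
  · rw [h j hj]

lemma pv_sds {n m : ℕ} (hn : 0 < n) (pv : PointVoting n m) : IsSDS (pvVal pv) := by
  refine ⟨fun R x => Finset.sum_nonneg (fun i _ => pv.nonneg _ (R i x).2), fun R => ?_⟩
  simp only [pvVal]
  rw [Finset.sum_comm]
  have : ∀ i : Fin n, ∑ x, pv.a (R i x : ℕ) = 1 / (n : ℝ) := by
    intro i
    rw [Equiv.sum_comp (R i) (fun k : Fin m => pv.a (k : ℕ)), ← pv.sum_eq, Finset.sum_range]
  simp only [this]
  have : (n : ℝ) ≠ 0 := by positivity
  simp [this]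

lemma dict_eq {n m : ℕ} (R : Profile n m) (i : Fin n) (x : Fin m) :
    dictProb R i x = if (R i x : ℕ) = 0 then 1 else 0 := by
  unfold dictProb
  congr 1
  refine propext ⟨fun h => ?_, fun h y => ?_⟩
  · have hm : 0 < m := lt_of_le_of_lt (Nat.zero_le _) x.2
    have := h ((R i).symm ⟨0, hm⟩)
    rw [Equiv.apply_symm_apply, Fin.le_def] at this
    simpa using this
  · rw [Fin.le_def, h]; exact Nat.zero_le _

/-- For `m ≥ 3`, every point voting SDS that is `0`-randomly
dictatorial and `1/m`-ex post efficient is the uniform lottery, i.e. its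
scoring vector is constant equal to `1/(mn)`. -/
theorem pointVoting_uniform (n m : ℕ) (hm : 3 ≤ m) (pv : PointVoting n m)
    (hrd : RandDictDegree (pvVal pv) 0)
    (heff : ExPostEff (pvVal pv) (1 / (m : ℝ))) :
    ∀ k : ℕ, k < m → pv.a k = 1 / ((m : ℝ) * (n : ℝ)) := by
  have hn : 0 < n := by
    obtain ⟨_, _, ⟨d, g, ⟨δ, _, h, _⟩, _⟩, _⟩ := hrd
    rcases Nat.eq_zero_or_pos n with h0 | h0
    · subst h0; simp at h
    · exact h0
  have hnR : (0 : ℝ) < n := by exact_mod_cast hn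
  have hmR : (0 : ℝ) < m := by exact_mod_cast (by omega : 0 < m)
  have h01 : pv.a 0 ≤ pv.a 1 := by
    by_contra hlt
    push Not at hlt
    set c := (pv.a 0 - pv.a 1) / 2 with hc
    have hcpos : 0 < c := by rw [hc]; linarith
    have ha0 : pv.a 0 ≤ 1 / (n : ℝ) := by
      rw [← pv.sum_eq]
      exact Finset.single_le_sum (f := pv.a) (fun k hk => pv.nonneg k (Finset.mem_range.mp hk))
        (Finset.mem_range.mpr (by omega))
    have ha1 : 0 ≤ pv.a 1 := pv.nonneg 1 (by omega)
    have hna0 : n * pv.a 0 ≤ 1 := by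
      rw [le_div_iff₀ hnR] at ha0; linarith
    set γ := n * c with hγ
    have hγpos : 0 < γ := by positivity
    have hγ1 : γ < 1 := by
      have : 0 ≤ n * pv.a 1 := by positivity
      rw [hγ, hc]; linarith
    have h1γ : 0 < 1 - γ := by linarith
    let q : PointVoting n m :=
      { a := fun k => (pv.a k - if k = 0 then c else 0) / (1 - γ)
        mono := by
          intro k l hkl hl
          refine div_le_div_of_nonneg_right ?_ h1γ.le
          have h := pv.mono k l hkl hl
          by_cases hk : k = 0
          · by_cases hl0 : l = 0
            · simp [hk, hl0]
            · have h' := pv.mono 1 l (by omega) hl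
              simp only [hk, hl0, if_true, if_false]
              rw [hc]; linarith
          · have hl0 : l ≠ 0 := by omega
            simpa [hk, hl0] using h
        nonneg := by
          intro k hk
          refine div_nonneg ?_ h1γ.le
          have h := pv.nonneg k hk
          by_cases hk : k = 0
          · simp only [hk, if_true]
            rw [hc]; linarith
          · simpa [hk] using h
        sum_eq := by
          rw [← Finset.sum_div, Finset.sum_sub_distrib, pv.sum_eq, Finset.sum_ite_eq' (range m) 0,
            if_pos (Finset.mem_range.mpr (by omega)), hγ, div_eq_div_iff (by rw [← hγ]; exact h1γ.ne') hnR.ne']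
          field_simp }
    have hdec : DecomposesAt (pvVal pv) γ := by
      refine ⟨fun R x => ∑ i, (1 / (n : ℝ)) * dictProb R i x, pvVal q,
        ⟨fun _ => 1 / (n : ℝ), fun _ => by positivity, ?_, fun _ _ => rfl⟩, pv_sds hn q, pv_sp q, ?_⟩
      · simp [hnR.ne']
      · intro R x
        simp only [pvVal]
        rw [Finset.mul_sum, Finset.mul_sum, ← Finset.sum_add_distrib]
        refine Finset.sum_congr rfl (fun i _ => ?_)
        rw [dict_eq]
        change _ = _ + (1 - γ) * ((pv.a (R i x : ℕ) - if (R i x : ℕ) = 0 then c else 0) / (1 - γ))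
        rw [mul_div_cancel₀ _ h1γ.ne']
        have : γ * (1 / (n : ℝ)) = c := by rw [hγ]; field_simp
        rw [← mul_assoc, this]
        split_ifs <;> ring
    have := hrd.2.2.2 γ hγpos.le hγ1.le hdec
    linarith
  have h1 : n * pv.a 1 ≤ 1 / (m : ℝ) := by
    have := heff (fun _ => Equiv.refl _) ⟨1, by omega⟩ ⟨⟨0, by omega⟩, fun i => by simp [Fin.lt_def]⟩
    simpa [pvVal] using this
  have hle : ∀ k ∈ Finset.range m, pv.a k ≤ 1 / ((m : ℝ) * (n : ℝ)) := by
    intro k hk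
    have h2 := pv.mono 0 k (Nat.zero_le _) (Finset.mem_range.mp hk)
    have h3 : pv.a 1 ≤ 1 / ((m : ℝ) * (n : ℝ)) := by
      rw [le_div_iff₀ hmR] at h1
      rw [le_div_iff₀ (by positivity)]
      linarith
    linarith
  have hsum : ∑ k ∈ Finset.range m, pv.a k = ∑ k ∈ Finset.range m, 1 / ((m : ℝ) * (n : ℝ)) := by
    rw [pv.sum_eq]
    simp only [Finset.sum_const, Finset.card_range, nsmul_eq_mul]
    field_simp
  intro k hk
  exact (Finset.sum_eq_sum_iff_of_le hle).mp hsum k (Finset.mem_range.mpr hk)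
end
end

section
/- Let m ≥ 4. Every supporting size SDS that is 1/m-ex post efficient is the uniform lottery, i.e., its defining vector satisfies b_k = 1/(m(m−1)) for all k ∈ {0,…,n}. -/
open Finset

noncomputable section

/-- For `m ≥ 4`, every supporting size SDS that is `1/m`-ex post
efficient is the uniform lottery, i.e. its defining vector is constant equal to
`1/(m(m-1))`. -/
theorem supportingSize_uniform (n m : ℕ) (hm : 4 ≤ m) (S : SupportingSize n m)
    (heff : ExPostEff (ssVal S) (1 / (m : ℝ))) :
    ∀ k : ℕ, k ≤ n → S.b k = 1 / ((m : ℝ) * ((m : ℝ) - 1)) := by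
  obtain ⟨p, rfl⟩ : ∃ p, m = p + 4 := ⟨m - 4, by omega⟩
  have h := heff (fun _ => Equiv.refl _) 1 ⟨0, fun i => by simp [Fin.lt_def]⟩
  have h10 : suppSize (n := n) (fun _ => Equiv.refl (Fin (p + 4))) 1 0 = 0 := by
    simp [suppSize]
  have h1s : ∀ y : Fin (p + 2), suppSize (n := n) (fun _ => Equiv.refl (Fin (p + 4))) 1
      (Fin.succ (Fin.succ y)) = n := by
    intro y
    have hlt : (1 : Fin (p + 4)) < Fin.succ (Fin.succ y) := by
      simp [Fin.lt_def]
    simp [suppSize, hlt]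
  have hne : ∀ y : Fin (p + 2), (Fin.succ (Fin.succ y) : Fin (p + 4)) ≠ 1 := by
    intro y hy
    have := congrArg Fin.val hy
    simp at this
  have hval : ssVal S (fun _ => Equiv.refl _) 1 = S.b 0 + ((p : ℝ) + 2) * S.b n := by
    unfold ssVal
    rw [Finset.sum_filter, Fin.sum_univ_succ, Fin.sum_univ_succ]
    simp only [h1s, h10]
    simp
    rw [Finset.sum_congr rfl (fun x _ => if_neg (hne x))]
    simp
  rw [hval] at h
  have hp := S.pair_eq 0 (Nat.zero_le n)
  rw [Nat.sub_zero] at hp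
  push_cast at h hp ⊢
  have hp0 : (0 : ℝ) ≤ p := Nat.cast_nonneg p
  set c : ℝ := 1 / (((p : ℝ) + 4) * ((p : ℝ) + 4 - 1)) with hc
  have e3 : (p : ℝ) + 4 - 1 ≠ 0 := by linarith
  have e1 : 1 / ((p : ℝ) + 4) = ((p : ℝ) + 3) * c := by
    rw [hc]; field_simp; ring
  have e2 : 2 / (((p : ℝ) + 4) * ((p : ℝ) + 4 - 1)) = 2 * c := by
    rw [hc]; ring
  rw [e1] at h
  rw [e2] at hp
  have hb : S.b n ≤ c := by
    by_contra! hcon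
    nlinarith
  intro k hk
  have h1 := S.mono 0 k (Nat.zero_le k) hk
  have h2 := S.mono k n hk le_rfl
  linarith
end
end
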